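/- Among the Co₀-orbits of Leech vectors of type at most 16, the conjugacy classes modulo 3Λ are exactly the following (orbits in the same class are pairwise conjugate modulo 3Λ, and orbits in different classes are not): {O₀}; {O₂, O_{8a}, O_{14c}}; {O₃, O_{12a}, O_{12b}, O_{15a}}; {O₄, O_{10b}, O_{13a}, O_{16a}, O_{16b}, O_{16d}}; {O₅, O_{8c}, O_{11a}, O_{14a}, O_{14d}}; {O_{6a}, O_{9a}, O_{12c}, O_{12e}, O_{15b}, O_{15e}}; {O_{6b}, O_{12d}, O_{15c}}; {O₇, O_{10a}, O_{10c}, O_{13b}, O_{13c}, O_{16c}, O_{16e}, O_{16f}, O_{16g}}; {O_{8b}, O_{11b}, O_{14b}, O_{14e}}; {O_{9b}, O_{12f}, O_{15d}}. -/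

import Mathlib

open Complex Matrix UpperHalfPlane
open scoped Manifold MatrixGroups Real Topology BigOperators

noncomputable section

/-- Vectors of the rank-24 lattice (coordinates w.r.t. a fixed basis). -/
abbrev LV := Fin 24 → ℤ

/-- Complexified vectors. -/
abbrev CV := Fin 24 → ℂ

/-- The bilinear form attached to a Gram matrix `B`. -/
def pairZ (B : Matrix (Fin 24) (Fin 24) ℤ) (v u : LV) : ℤ := v ⬝ᵥ B.mulVec u

/-- The complex bilinear extension of the form. -/
def pairC (B : Matrix (Fin 24) (Fin 24) ℤ) (z w : CV) : ℂ :=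
  z ⬝ᵥ ((B.map (Int.cast : ℤ → ℂ)).mulVec w)

/-- Inclusion of lattice vectors into complexified vectors. -/
def liftC (v : LV) : CV := fun i => (v i : ℂ)

/-- `B` is a Gram matrix of the Leech lattice: even, unimodular, positive definite of
rank 24, with no vectors of norm 2 (no roots). -/
def IsLeech (B : Matrix (Fin 24) (Fin 24) ℤ) : Prop :=
  B.IsSymm ∧ B.det = 1 ∧ (∀ v : LV, v ≠ 0 → 0 < pairZ B v v) ∧
    (∀ v : LV, Even (pairZ B v v)) ∧ (∀ v : LV, pairZ B v v ≠ 2)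

/-- The automorphism group `Co₀ = Aut(Λ)` of the lattice, as a set of integral matrices. -/
def ConwayGroup (B : Matrix (Fin 24) (Fin 24) ℤ) : Set (Matrix (Fin 24) (Fin 24) ℤ) :=
  {σ | IsUnit σ.det ∧ σᵀ * B * σ = B}

/-- Action of an integral matrix on complexified vectors. -/
def actC (σ : Matrix (Fin 24) (Fin 24) ℤ) (z : CV) : CV :=
  (σ.map (Int.cast : ℤ → ℂ)).mulVec z

/-- `e(x) = exp(2πix)`. -/
def eC (x : ℂ) : ℂ := Complex.exp (2 * (Real.pi : ℂ) * Complex.I * x)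

/-- The Fourier term `qⁿ ζ^ℓ`. -/
def fterm (B : Matrix (Fin 24) (Fin 24) ℤ) (n : ℕ) (ℓ : LV) (τ : UpperHalfPlane) (z : CV) : ℂ :=
  eC ((n : ℂ) * (τ : ℂ)) * eC (pairC B (liftC ℓ) z)

/-- Lower-left entry of `A ∈ SL(2,ℤ)`, as a complex number. -/
def slc (A : SL(2, ℤ)) : ℂ := ((A : Matrix (Fin 2) (Fin 2) ℤ) 1 0 : ℤ)

/-- Lower-right entry of `A ∈ SL(2,ℤ)`, as a complex number. -/
def sld (A : SL(2, ℤ)) : ℂ := ((A : Matrix (Fin 2) (Fin 2) ℤ) 1 1 : ℤ)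

/-- The automorphy factor `cτ + d`. -/
def jfactor (A : SL(2, ℤ)) (τ : UpperHalfPlane) : ℂ := slc A * (τ : ℂ) + sld A

/-- `φ : ℍ × (Λ⊗ℂ) → ℂ` is a Conway invariant weak Jacobi form of weight `k` and index `t`
with Fourier coefficients `f`. -/
structure IsJacobiFormWith (B : Matrix (Fin 24) (Fin 24) ℤ) (k : ℤ) (t : ℕ)
    (φ : UpperHalfPlane → CV → ℂ) (f : ℕ → LV → ℂ) : Prop where
  holo_tau : ∀ z : CV, MDifferentiable 𝓘(ℂ) 𝓘(ℂ) fun τ : UpperHalfPlane => φ τ z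
  holo_z : ∀ τ : UpperHalfPlane, Differentiable ℂ (φ τ)
  conway_invar : ∀ σ ∈ ConwayGroup B, ∀ (τ : UpperHalfPlane) (z : CV), φ τ (actC σ z) = φ τ z
  quasi_periodic : ∀ (x y : LV) (τ : UpperHalfPlane) (z : CV),
    φ τ (z + (τ : ℂ) • liftC x + liftC y) =
      Complex.exp (-(t : ℂ) * (Real.pi : ℂ) * Complex.I * (pairZ B x x : ℂ) * (τ : ℂ)
        - 2 * (t : ℂ) * (Real.pi : ℂ) * Complex.I * pairC B (liftC x) z) * φ τ z
  modular : ∀ (A : SL(2, ℤ)) (τ : UpperHalfPlane) (z : CV),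
    φ (A • τ) ((jfactor A τ)⁻¹ • z) =
      (jfactor A τ) ^ k *
        Complex.exp ((t : ℂ) * (Real.pi : ℂ) * Complex.I * slc A * pairC B z z / jfactor A τ) *
        φ τ z
  expansion : ∀ (τ : UpperHalfPlane) (z : CV),
    HasSum (fun p : ℕ × LV => f p.1 p.2 * fterm B p.1 p.2 τ z) (φ τ z)

/-- Conway invariant weak Jacobi forms. -/
def IsWeakJacobiForm (B : Matrix (Fin 24) (Fin 24) ℤ) (k : ℤ) (t : ℕ)
    (φ : UpperHalfPlane → CV → ℂ) : Prop :=
  ∃ f, IsJacobiFormWith B k t φ f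

/-- Conway invariant holomorphic Jacobi forms. -/
def IsHolJacobiForm (B : Matrix (Fin 24) (Fin 24) ℤ) (k : ℤ) (t : ℕ)
    (φ : UpperHalfPlane → CV → ℂ) : Prop :=
  ∃ f, IsJacobiFormWith B k t φ f ∧
    ∀ (n : ℕ) (ℓ : LV), 2 * (n : ℤ) * t - pairZ B ℓ ℓ < 0 → f n ℓ = 0

/-- Modular forms of weight `k` on `SL₂(ℤ)`; the ring of all of them is `ℂ[E₄,E₆]`. -/
abbrev MForm (k : ℤ) := ModularForm (CongruenceSubgroup.Gamma 1) k

/-- The family `φ i` (of weights `w i`) freely generates the module of all forms satisfying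
`P` over the ring `M_*(SL₂(ℤ)) = ℂ[E₄,E₆]` of modular forms on `SL₂(ℤ)`. -/
def FreelyGenerates (P : ℤ → (UpperHalfPlane → CV → ℂ) → Prop) {n : ℕ}
    (w : Fin n → ℤ) (φ : Fin n → UpperHalfPlane → CV → ℂ) : Prop :=
  (∀ i, P (w i) (φ i)) ∧
  ∀ (k : ℤ) (ψ : UpperHalfPlane → CV → ℂ), P k ψ →
    ∃! g : (i : Fin n) → MForm (k - w i),
      ∀ (τ : UpperHalfPlane) (z : CV), ψ τ z = ∑ i, (g i) τ * φ i τ z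

/-- The point `(aτ+b)/d` of the upper half-plane (for `a, d > 0`). -/
def heckePt (a d b : ℕ) (τ : UpperHalfPlane) : UpperHalfPlane :=
  if h : 0 < ((((a : ℂ) * (τ : ℂ) + (b : ℂ)) / (d : ℂ)).im) then
    ⟨((a : ℂ) * (τ : ℂ) + (b : ℂ)) / (d : ℂ), h⟩ else τ

/-- The Hecke operator `T₋(m)` on Jacobi forms of weight `k`. -/
def heckeOp (k : ℤ) (m : ℕ) (φ : UpperHalfPlane → CV → ℂ) : UpperHalfPlane → CV → ℂ :=
  fun τ z => (m : ℂ)⁻¹ * ∑ d ∈ m.divisors, ∑ b ∈ Finset.range d,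
    ((m / d : ℕ) : ℂ) ^ k * φ (heckePt (m / d) d b τ) (((m / d : ℕ) : ℂ) • z)

/-- The Jacobi theta function `Θ_Λ = A₁` of the lattice. -/
def thetaLeech (B : Matrix (Fin 24) (Fin 24) ℤ) : UpperHalfPlane → CV → ℂ := fun τ z =>
  ∑' ℓ : LV, Complex.exp ((Real.pi : ℂ) * Complex.I * (pairZ B ℓ ℓ : ℂ) * (τ : ℂ)
    + 2 * (Real.pi : ℂ) * Complex.I * pairC B (liftC ℓ) z)

/-- `σ_k(n) = Σ_{d ∣ n} d^k`. -/
def sigmaNat (k n : ℕ) : ℕ := ∑ d ∈ n.divisors, d ^ k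

/-- `A_t = σ₁₁(t)⁻¹ (A₁ | T₋(t))`, a holomorphic Jacobi form of weight 12 and index `t`. -/
def Aform (B : Matrix (Fin 24) (Fin 24) ℤ) (t : ℕ) : UpperHalfPlane → CV → ℂ := fun τ z =>
  ((sigmaNat 11 t : ℂ))⁻¹ * heckeOp 12 t (thetaLeech B) τ z

/-- The quasimodular Eisenstein series `E₂`. -/
def E2 : UpperHalfPlane → ℂ := fun τ =>
  1 - 24 * ∑' n : ℕ, (sigmaNat 1 (n + 1) : ℂ) * eC (((n : ℂ) + 1) * (τ : ℂ))

/-- The discriminant cusp form `Δ(τ) = q ∏ (1-qⁿ)^24`. -/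
def DeltaForm : UpperHalfPlane → ℂ := fun τ =>
  eC (τ : ℂ) * ∏' n : ℕ, (1 - eC (((n : ℂ) + 1) * (τ : ℂ))) ^ 24

/-- `aτ`. -/
def scaleH (a : ℕ) (τ : UpperHalfPlane) : UpperHalfPlane := heckePt a 1 0 τ

/-- `(τ+j)/t`. -/
def sliceH (t j : ℕ) (τ : UpperHalfPlane) : UpperHalfPlane := heckePt 1 t j τ

/-- `f₂(τ) = (tE₂(tτ) - E₂(τ))/(t-1)`, a modular form of weight 2 on `Γ₀(t)`. -/
def f2w (t : ℕ) (τ : UpperHalfPlane) : ℂ := ((t : ℂ) * E2 (scaleH t τ) - E2 τ) / ((t : ℂ) - 1)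

/-- `B_t`, a holomorphic Jacobi form of weight 14 and index `t` (for `t` prime). -/
def Bform (B : Matrix (Fin 24) (Fin 24) ℤ) (t : ℕ) : UpperHalfPlane → CV → ℂ := fun τ z =>
  ((t : ℂ) ^ 12 / ((t : ℂ) ^ 12 - 1)) *
    (f2w t τ * thetaLeech B (scaleH t τ) ((t : ℂ) • z)
      - (t : ℂ) ^ (-13 : ℤ) *
        ∑ j ∈ Finset.range t, f2w t (sliceH t j τ) * thetaLeech B (sliceH t j τ) z)

/-- Fourier coefficients of `E₂`. -/
def e2coeff : ℕ → ℂ := fun m => if m = 0 then 1 else -24 * (sigmaNat 1 m : ℂ)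

/-- Fourier coefficients of the image `H_k(φ)` of the modified heat operator applied to a
Jacobi form of weight `k` and index `t` with Fourier coefficients `f`:
`H_k(φ) = 𝓗(φ) + ((12-k)/12)E₂φ` where `𝓗` multiplies `f(n,ℓ)` by `n - (ℓ,ℓ)/(2t)`. -/
def heatCoeff (B : Matrix (Fin 24) (Fin 24) ℤ) (k : ℤ) (t : ℕ) (f : ℕ → LV → ℂ) :
    ℕ → LV → ℂ := fun n ℓ =>
  ((n : ℂ) - (pairZ B ℓ ℓ : ℂ) / (2 * (t : ℂ))) * f n ℓ +
    ((12 - k : ℤ) : ℂ) / 12 * ∑ m ∈ Finset.range (n + 1), e2coeff m * f (n - m) ℓ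

/-- The function with Fourier coefficients `f`. -/
def fourierSeries (B : Matrix (Fin 24) (Fin 24) ℤ) (f : ℕ → LV → ℂ) :
    UpperHalfPlane → CV → ℂ := fun τ z =>
  ∑' p : ℕ × LV, f p.1 p.2 * fterm B p.1 p.2 τ z

/-- The family `Φ m = Φ_{12,m}` of Fourier–Jacobi coefficients of the Borcherds form `Φ₁₂`
at the Leech cusp:
`Δ(τ)·exp(−Σ_{m≥1}((Δ⁻¹A₁)|T₋(m))(τ,𝔷)e^{2πimω}) = Σ_{m≥0} Φ_{12,m}(τ,𝔷)e^{2πimω}`. -/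
def IsFJExpansionOfPhi12 (B : Matrix (Fin 24) (Fin 24) ℤ)
    (Φ : ℕ → UpperHalfPlane → CV → ℂ) : Prop :=
  ∀ (τ ω : UpperHalfPlane) (z : CV),
    HasSum (fun m : ℕ => Φ m τ z * eC ((m : ℂ) * (ω : ℂ)))
      (DeltaForm τ * Complex.exp
        (- ∑' m : ℕ, heckeOp 0 (m + 1) (fun σ w => thetaLeech B σ w / DeltaForm σ) τ z *
            eC (((m : ℂ) + 1) * (ω : ℂ))))

/-- `S_t`: the set of lattice vectors of minimal norm in their coset modulo `tΛ`. -/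
def minimalSet (B : Matrix (Fin 24) (Fin 24) ℤ) (t : ℕ) : Set LV :=
  {v | ∀ u : LV, (∃ w : LV, u = v + (t : ℤ) • w) → pairZ B v v ≤ pairZ B u u}

/-- `v` and `u` are conjugate modulo `tΛ` up to the Conway group. -/
def conjModT (B : Matrix (Fin 24) (Fin 24) ℤ) (t : ℕ) (v u : LV) : Prop :=
  ∃ σ ∈ ConwayGroup B, ∃ w : LV, v - σ.mulVec u = (t : ℤ) • w

/-- `s(t) = |(S_t/Co₀)/tΛ|`. -/
def sRank (B : Matrix (Fin 24) (Fin 24) ℤ) (t : ℕ) : ℕ :=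
  Nat.card (Quot (fun v u : minimalSet B t => conjModT B t v.1 u.1))

/-- `R` is a system of representatives for `(S_t/Co₀)/tΛ` (of minimal length). -/
def IsRepSystem (B : Matrix (Fin 24) (Fin 24) ℤ) (t : ℕ) (R : Finset LV) : Prop :=
  (↑R ⊆ minimalSet B t) ∧ ∀ v ∈ minimalSet B t, ∃! r, r ∈ R ∧ conjModT B t v r

/-- The Conway orbit of a lattice vector. -/
def orbitOf (B : Matrix (Fin 24) (Fin 24) ℤ) (v : LV) : Set LV :=
  {u | ∃ σ ∈ ConwayGroup B, u = σ.mulVec v}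

/-- `O` is a Conway orbit of Leech vectors of type `x` (i.e. norm `2x`) with `c` elements. -/
def OrbitData (B : Matrix (Fin 24) (Fin 24) ℤ) (O : Set LV) (x c : ℕ) : Prop :=
  (∃ v : LV, O = orbitOf B v) ∧ (∀ v ∈ O, pairZ B v v = 2 * (x : ℤ)) ∧ Nat.card O = c

/-- `W` is a `d`-dimensional subspace of the space of functions `ℍ × (Λ⊗ℂ) → ℂ`. -/
def SpanDimIs (W : (UpperHalfPlane → CV → ℂ) → Prop) (d : ℕ) : Prop :=
  ∃ φ : Fin d → UpperHalfPlane → CV → ℂ, (∀ i, W (φ i)) ∧ LinearIndependent ℂ φ ∧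
    ∀ ψ, W ψ → ∃ c : Fin d → ℂ, ψ = ∑ i, c i • φ i


/-- Two Conway orbits are conjugate modulo `3Λ` if some of their vectors are congruent
modulo `3Λ`. -/
def conjOrb3 (O O' : Set LV) : Prop :=
  ∃ v ∈ O, ∃ u ∈ O', ∃ w : LV, v - u = (3 : ℤ) • w

/-!
The theorem rests on a perfect covering. Any two congruent vectors modulo `3Λ` differ by `3w` with
`(w, w) ≥ 4`, which makes short vectors of one coset rare: the ten orbits `O₀`, `O₂`, …, `O₅`,
`O_{6a}`, `O_{6b}`, `O₇`, `O_{8b}`, `O_{9b}` meet pairwise disjoint sets of cosets, and each meets a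
coset in at most `1`, `1`, …, `1`, `3`, `2`, `9`, `36` vectors. The sizes of the orbits divided by
these bounds add up to exactly `3²⁴ = |Λ/3Λ|`, so every coset is met and every bound is attained.

Hence every orbit `O` is conjugate to exactly one of the ten, and its size determines how many
vectors of `O` lie in each coset it meets. The class of `O` follows because all other candidates
give a non-integral number or exceed an upper bound. The bounds come from counting minimal vectors
`w` with prescribed `(v, w)`; since the covering modulo `2Λ` by `O₀`, `O₂`, `O₃`, `O₄` is perfect as
well, the minimal vectors are the orbit `O₂` and form a tight frame, which gives these counts. For
`O_{12f}` and `O_{15d}` against `O_{6a}` this is not enough: there `O_{9a}` provides, for each `v`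
in `O_{6a}`, a coordinate frame of `24` minimal vectors, in which the relevant vectors become
subsets with small pairwise intersections.
-/

section Welch

variable {ι n : Type*}

/-- The frame operator `∑ᵢ eᵢ eᵢᵀ` of a finite family of vectors, as a matrix. -/
def frameMatrix (s : Finset ι) (e : ι → n → ℝ) : Matrix n n ℝ := ∑ i ∈ s, vecMulVec (e i) (e i)

lemma isSymm_frameMatrix (s : Finset ι) (e : ι → n → ℝ) : (frameMatrix s e).IsSymm := by
  simp [Matrix.IsSymm, frameMatrix, transpose_sum, transpose_vecMulVec]

variable [Fintype n]

lemma trace_mul_self_nonneg {A : Matrix n n ℝ} (hA : A.IsSymm) : 0 ≤ (A * A).trace := by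
  simpa [hA.eq] using (posSemidef_conjTranspose_mul_self A).trace_nonneg

lemma trace_mul_self_eq_zero_iff {A : Matrix n n ℝ} (hA : A.IsSymm) :
    (A * A).trace = 0 ↔ A = 0 := by
  simpa [hA.eq] using trace_conjTranspose_mul_self_eq_zero_iff (A := A)

lemma trace_frameMatrix (s : Finset ι) (e : ι → n → ℝ) :
    (frameMatrix s e).trace = ∑ i ∈ s, e i ⬝ᵥ e i := by
  simp [frameMatrix, trace_sum]

lemma trace_frameMatrix_mul_self (s : Finset ι) (e : ι → n → ℝ) :
    (frameMatrix s e * frameMatrix s e).trace = ∑ i ∈ s, ∑ j ∈ s, (e i ⬝ᵥ e j) ^ 2 := by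
  simp [frameMatrix, Finset.sum_mul_sum, trace_sum, vecMulVec_mul_vecMulVec, sq]

lemma sum_dotProduct_sq_eq (s : Finset ι) (e : ι → n → ℝ) (x : n → ℝ) :
    ∑ i ∈ s, (x ⬝ᵥ e i) ^ 2 = x ⬝ᵥ frameMatrix s e *ᵥ x := by
  simp only [frameMatrix, sum_mulVec, dotProduct_sum, vecMulVec_mulVec, op_smul_eq_smul,
    dotProduct_smul, smul_eq_mul, dotProduct_comm (e _) x, sq]

lemma trace_card_smul_sub_sq [DecidableEq n] (A : Matrix n n ℝ) :
    (((Fintype.card n : ℝ) • A - A.trace • 1) * ((Fintype.card n : ℝ) • A - A.trace • 1)).trace =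
      Fintype.card n * (Fintype.card n * (A * A).trace - A.trace ^ 2) := by
  simp only [sub_mul, mul_sub, trace_sub, smul_mul_assoc, mul_smul_comm, trace_smul, mul_one,
    one_mul, smul_eq_mul, trace_one]
  ring

lemma isSymm_card_smul_sub [DecidableEq n] {A : Matrix n n ℝ} (hA : A.IsSymm) :
    ((Fintype.card n : ℝ) • A - A.trace • 1).IsSymm := by
  simp [Matrix.IsSymm, hA.eq]

lemma sq_trace_le {A : Matrix n n ℝ} (hA : A.IsSymm) :
    A.trace ^ 2 ≤ Fintype.card n * (A * A).trace := by
  classical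
  cases isEmpty_or_nonempty n
  · simp [trace]
  have hcard : (0 : ℝ) < Fintype.card n := by exact_mod_cast Fintype.card_pos
  have hdev := trace_mul_self_nonneg (isSymm_card_smul_sub hA)
  rw [trace_card_smul_sub_sq] at hdev
  exact sub_nonneg.mp (nonneg_of_mul_nonneg_right hdev hcard)

lemma card_smul_eq_of_sq_trace_eq [DecidableEq n] {A : Matrix n n ℝ} (hA : A.IsSymm)
    (h : A.trace ^ 2 = Fintype.card n * (A * A).trace) :
    (Fintype.card n : ℝ) • A = A.trace • 1 := by
  rw [← sub_eq_zero, ← trace_mul_self_eq_zero_iff (isSymm_card_smul_sub hA),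
    trace_card_smul_sub_sq, h, sub_self, mul_zero]

theorem welch_bound (s : Finset ι) (e : ι → n → ℝ) :
    (∑ i ∈ s, e i ⬝ᵥ e i) ^ 2 ≤ Fintype.card n * ∑ i ∈ s, ∑ j ∈ s, (e i ⬝ᵥ e j) ^ 2 := by
  rw [← trace_frameMatrix, ← trace_frameMatrix_mul_self]
  exact sq_trace_le (isSymm_frameMatrix s e)

theorem tight_frame_of_welch_eq (s : Finset ι) (e : ι → n → ℝ)
    (h : (∑ i ∈ s, e i ⬝ᵥ e i) ^ 2 = Fintype.card n * ∑ i ∈ s, ∑ j ∈ s, (e i ⬝ᵥ e j) ^ 2)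
    (x : n → ℝ) :
    Fintype.card n * ∑ i ∈ s, (x ⬝ᵥ e i) ^ 2 = (∑ i ∈ s, e i ⬝ᵥ e i) * (x ⬝ᵥ x) := by
  classical
  rw [← trace_frameMatrix, ← trace_frameMatrix_mul_self] at h
  rw [← trace_frameMatrix, sum_dotProduct_sq_eq, ← smul_eq_mul, ← dotProduct_smul, ← smul_mulVec,
    card_smul_eq_of_sq_trace_eq (isSymm_frameMatrix s e) h, smul_mulVec, one_mulVec,
    dotProduct_smul, smul_eq_mul]

end Welch

section GramEmbedding

variable {n : Type*} [Fintype n] {B : Matrix n n ℤ}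

lemma intCast_dotProduct_mulVec (B : Matrix n n ℤ) (x y : n → ℤ) :
    ((x ⬝ᵥ B *ᵥ y : ℤ) : ℝ) =
      (fun i => (x i : ℝ)) ⬝ᵥ (B.map Int.cast) *ᵥ (fun i => (y i : ℝ)) := by
  simp [dotProduct, mulVec]

lemma ratCast_dotProduct_mulVec_nonneg (h : ∀ v, 0 ≤ v ⬝ᵥ B *ᵥ v) (q : n → ℚ) :
    0 ≤ (fun i => (q i : ℝ)) ⬝ᵥ (B.map Int.cast) *ᵥ (fun i => (q i : ℝ)) := by
  obtain ⟨b, hb⟩ := IsLocalization.exist_integer_multiples_of_finite (nonZeroDivisors ℤ) q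
  choose v hv using hb
  have hb0 : ((b : ℤ) : ℝ) ≠ 0 := by exact_mod_cast nonZeroDivisors.ne_zero b.2
  have hvq : (fun i => (v i : ℝ)) = ((b : ℤ) : ℝ) • (fun i => (q i : ℝ)) := by
    ext i
    have hvi := hv i
    simp only [algebraMap_int_eq, eq_intCast, zsmul_eq_mul] at hvi
    simpa using congrArg (Rat.cast : ℚ → ℝ) hvi
  have hnonneg : (0 : ℝ) ≤ ((v ⬝ᵥ B *ᵥ v : ℤ) : ℝ) := by exact_mod_cast h v
  rw [intCast_dotProduct_mulVec, hvq, mulVec_smul, smul_dotProduct, dotProduct_smul, smul_smul,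
    smul_eq_mul] at hnonneg
  exact nonneg_of_mul_nonneg_right hnonneg (mul_self_pos.mpr hb0)

theorem posSemidef_map_intCast (hB : B.IsSymm) (h : ∀ v, 0 ≤ v ⬝ᵥ B *ᵥ v) :
    (B.map (Int.cast : ℤ → ℝ)).PosSemidef := by
  have hdense : DenseRange (fun (q : n → ℚ) i => (q i : ℝ)) :=
    DenseRange.piMap fun _ => Rat.denseRange_cast
  have hcont : Continuous fun x : n → ℝ => x ⬝ᵥ (B.map Int.cast) *ᵥ x := by
    unfold dotProduct mulVec dotProduct
    fun_prop
  refine .of_dotProduct_mulVec_nonneg ?_ fun x => ?_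
  · ext i j
    simp [hB.apply]
  · simpa using hdense.induction_on (p := fun x => 0 ≤ x ⬝ᵥ (B.map Int.cast) *ᵥ x) x
      (isClosed_le continuous_const hcont) (ratCast_dotProduct_mulVec_nonneg h)

open MatrixOrder Matrix.Norms.L2Operator in
theorem exists_gram_embedding (hB : B.IsSymm) (h : ∀ v, 0 ≤ v ⬝ᵥ B *ᵥ v) :
    ∃ e : (n → ℤ) → n → ℝ, ∀ x y, e x ⬝ᵥ e y = ((x ⬝ᵥ B *ᵥ y : ℤ) : ℝ) := by
  classical
  obtain ⟨P, hP⟩ :=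
    CStarAlgebra.nonneg_iff_eq_star_mul_self.mp (posSemidef_map_intCast hB h).nonneg
  refine ⟨fun x => P *ᵥ fun i => (x i : ℝ), fun x y => ?_⟩
  rw [intCast_dotProduct_mulVec, hP, star_eq_conjTranspose, ← mulVec_mulVec, dotProduct_mulVec _ Pᴴ,
    ← mulVec_transpose, conjTranspose_eq_transpose_of_trivial, transpose_transpose]

end GramEmbedding

section PerfectCovering

variable {α β ι : Type*} [Fintype β] [DecidableEq β] [Fintype ι]

-- The fibre bounds make every `S i` occupy at least `n i` values; there is no room for more.
lemma card_image_eq_of_perfect_covering {f : α → β} {S : ι → Finset α} {d n : ι → ℕ}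
    (hd : ∀ i, 0 < d i) (hfib : ∀ i, ∀ x ∈ S i, ((S i).filter (f · = f x)).card ≤ d i)
    (hdisj : ∀ i j, ∀ x ∈ S i, ∀ y ∈ S j, f x = f y → i = j)
    (hcard : ∀ i, (S i).card = d i * n i) (hsum : ∑ i, n i = Fintype.card β) :
    (Finset.univ.biUnion fun i => (S i).image f) = Finset.univ ∧
      ∀ i, ((S i).image f).card = n i := by
  have hle : ∀ i ∈ Finset.univ, n i ≤ ((S i).image f).card := fun i _ => by
    have h : (S i).card ≤ d i * ((S i).image f).card :=
      Finset.card_le_mul_card_image _ _ (Finset.forall_mem_image.mpr (hfib i))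
    exact Nat.le_of_mul_le_mul_left (hcard i ▸ h) (hd i)
  have hunion : (Finset.univ.biUnion fun i => (S i).image f).card = ∑ i, ((S i).image f).card := by
    refine Finset.card_biUnion fun i _ j _ hij => Finset.disjoint_left.mpr fun b hi hj => ?_
    obtain ⟨x, hx, rfl⟩ := Finset.mem_image.mp hi
    obtain ⟨y, hy, hyx⟩ := Finset.mem_image.mp hj
    exact hij (hdisj i j x hx y hy hyx.symm)
  have hbound := Finset.card_le_univ (Finset.univ.biUnion fun i => (S i).image f)
  have hsum_le := Finset.sum_le_sum hle
  refine ⟨Finset.eq_univ_of_card _ (by omega), fun i => ?_⟩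
  exact ((Finset.sum_eq_sum_iff_of_le hle).mp (by omega) i (Finset.mem_univ i)).symm

theorem perfect_covering {f : α → β} {S : ι → Finset α} {d n : ι → ℕ}
    (hd : ∀ i, 0 < d i) (hfib : ∀ i, ∀ x ∈ S i, ((S i).filter (f · = f x)).card ≤ d i)
    (hdisj : ∀ i j, ∀ x ∈ S i, ∀ y ∈ S j, f x = f y → i = j)
    (hcard : ∀ i, (S i).card = d i * n i) (hsum : ∑ i, n i = Fintype.card β) :
    (∀ b, ∃ i, ∃ x ∈ S i, f x = b) ∧
      ∀ i, ∀ x ∈ S i, ((S i).filter (f · = f x)).card = d i := by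
  obtain ⟨hcover, himage⟩ := card_image_eq_of_perfect_covering hd hfib hdisj hcard hsum
  refine ⟨fun b => by simpa using hcover.ge (Finset.mem_univ b), fun i x hx => ?_⟩
  have hle : ∀ b ∈ (S i).image f, ((S i).filter (f · = b)).card ≤ d i :=
    Finset.forall_mem_image.mpr (hfib i)
  refine (Finset.sum_eq_sum_iff_of_le hle).mp ?_ _ (Finset.mem_image_of_mem f hx)
  rw [← Finset.card_eq_sum_card_image, Finset.sum_const, himage, hcard, smul_eq_mul, mul_comm]

end PerfectCovering

section Pairing

variable {B : Matrix (Fin 24) (Fin 24) ℤ}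

lemma pairZ_add_left (x y z : LV) : pairZ B (x + y) z = pairZ B x z + pairZ B y z :=
  add_dotProduct ..

lemma pairZ_add_right (x y z : LV) : pairZ B x (y + z) = pairZ B x y + pairZ B x z := by
  simp only [pairZ, mulVec_add, dotProduct_add]

lemma pairZ_sub_left (x y z : LV) : pairZ B (x - y) z = pairZ B x z - pairZ B y z :=
  sub_dotProduct ..

lemma pairZ_sub_right (x y z : LV) : pairZ B x (y - z) = pairZ B x y - pairZ B x z := by
  simp only [pairZ, mulVec_sub, dotProduct_sub]

lemma pairZ_neg_left (x z : LV) : pairZ B (-x) z = -pairZ B x z :=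
  neg_dotProduct ..

lemma pairZ_neg_right (x z : LV) : pairZ B x (-z) = -pairZ B x z := by
  simp only [pairZ, mulVec_neg, dotProduct_neg]

lemma pairZ_smul_left (c : ℤ) (x z : LV) : pairZ B (c • x) z = c * pairZ B x z :=
  smul_dotProduct ..

lemma pairZ_smul_right (c : ℤ) (x z : LV) : pairZ B x (c • z) = c * pairZ B x z := by
  simp only [pairZ, mulVec_smul, dotProduct_smul, smul_eq_mul]

lemma pairZ_zero_left (x : LV) : pairZ B 0 x = 0 :=
  zero_dotProduct _

lemma pairZ_zero_right (x : LV) : pairZ B x 0 = 0 := by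
  simp only [pairZ, mulVec_zero, dotProduct_zero]

lemma pairZ_sum_left {ι : Type*} (s : Finset ι) (f : ι → LV) (z : LV) :
    pairZ B (∑ i ∈ s, f i) z = ∑ i ∈ s, pairZ B (f i) z :=
  sum_dotProduct ..

lemma pairZ_sum_right {ι : Type*} (s : Finset ι) (f : ι → LV) (z : LV) :
    pairZ B z (∑ i ∈ s, f i) = ∑ i ∈ s, pairZ B z (f i) := by
  simp only [pairZ, mulVec_sum, dotProduct_sum]

lemma pairZ_smul_self (c : ℤ) (x : LV) : pairZ B (c • x) (c • x) = c ^ 2 * pairZ B x x := by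
  rw [pairZ_smul_left, pairZ_smul_right]
  ring

lemma pairZ_neg_self (x : LV) : pairZ B (-x) (-x) = pairZ B x x := by
  rw [pairZ_neg_left, pairZ_neg_right, neg_neg]

namespace IsLeech

lemma pairZ_comm (hB : IsLeech B) (x y : LV) : pairZ B x y = pairZ B y x := by
  rw [pairZ, dotProduct_mulVec, ← mulVec_transpose, hB.1.eq, dotProduct_comm, pairZ]

lemma pairZ_sub_self (hB : IsLeech B) (x y : LV) :
    pairZ B (x - y) (x - y) = pairZ B x x + pairZ B y y - 2 * pairZ B x y := by
  rw [pairZ_sub_left, pairZ_sub_right, pairZ_sub_right, hB.pairZ_comm y x]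
  ring

lemma pairZ_add_self (hB : IsLeech B) (x y : LV) :
    pairZ B (x + y) (x + y) = pairZ B x x + pairZ B y y + 2 * pairZ B x y := by
  rw [pairZ_add_left, pairZ_add_right, pairZ_add_right, hB.pairZ_comm y x]
  ring

lemma pairZ_self_nonneg (hB : IsLeech B) (x : LV) : 0 ≤ pairZ B x x := by
  obtain rfl | hx := eq_or_ne x 0
  · rw [pairZ_zero_left]
  · exact (hB.2.2.1 x hx).le

lemma eq_zero_of_pairZ_self_lt (hB : IsLeech B) {x : LV} (h : pairZ B x x < 4) : x = 0 := by
  by_contra hx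
  have hpos := hB.2.2.1 x hx
  obtain ⟨k, hk⟩ := hB.2.2.2.1 x
  have hroot := hB.2.2.2.2 x
  omega

lemma eq_of_pairZ_sub_self_lt (hB : IsLeech B) {x y : LV} (h : pairZ B (x - y) (x - y) < 4) :
    x = y :=
  sub_eq_zero.mp (hB.eq_zero_of_pairZ_self_lt h)

lemma exists_type (hB : IsLeech B) {x : LV} (hx : x ≠ 0) :
    ∃ t : ℤ, 2 ≤ t ∧ pairZ B x x = 2 * t := by
  obtain ⟨k, hk⟩ := hB.2.2.2.1 x
  have := mt hB.eq_zero_of_pairZ_self_lt hx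
  exact ⟨k, by omega, by omega⟩

lemma exists_gram_embedding (hB : IsLeech B) :
    ∃ e : LV → Fin 24 → ℝ, ∀ x y, e x ⬝ᵥ e y = (pairZ B x y : ℝ) :=
  _root_.exists_gram_embedding hB.1 hB.pairZ_self_nonneg

theorem welch_bound (hB : IsLeech B) {ι : Type*} (s : Finset ι) (f : ι → LV) :
    (∑ i ∈ s, pairZ B (f i) (f i)) ^ 2 ≤
      24 * ∑ i ∈ s, ∑ j ∈ s, pairZ B (f i) (f j) ^ 2 := by
  obtain ⟨e, he⟩ := hB.exists_gram_embedding
  have h := _root_.welch_bound s (e ∘ f)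
  simp only [Function.comp, he, Fintype.card_fin] at h
  exact_mod_cast h

theorem tight_frame_of_welch_eq (hB : IsLeech B) {ι : Type*} (s : Finset ι) (f : ι → LV)
    (h : (∑ i ∈ s, pairZ B (f i) (f i)) ^ 2 = 24 * ∑ i ∈ s, ∑ j ∈ s, pairZ B (f i) (f j) ^ 2)
    (x : LV) :
    24 * ∑ i ∈ s, pairZ B x (f i) ^ 2 = (∑ i ∈ s, pairZ B (f i) (f i)) * pairZ B x x := by
  obtain ⟨e, he⟩ := hB.exists_gram_embedding
  have htight := _root_.tight_frame_of_welch_eq s (e ∘ f)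
    (by simp only [Function.comp, he, Fintype.card_fin]; exact_mod_cast h) (e x)
  simp only [Function.comp, he, Fintype.card_fin] at htight
  exact_mod_cast htight

end IsLeech

end Pairing

section Orbits

variable {B σ τ : Matrix (Fin 24) (Fin 24) ℤ}

lemma pairZ_mulVec_mulVec (hσ : σ ∈ ConwayGroup B) (x y : LV) :
    pairZ B (σ *ᵥ x) (σ *ᵥ y) = pairZ B x y := by
  conv_rhs => rw [pairZ, ← hσ.2]
  rw [pairZ, ← mulVec_mulVec, ← mulVec_mulVec, dotProduct_mulVec x, ← mulVec_transpose,
    transpose_transpose]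

lemma one_mem_conwayGroup : 1 ∈ ConwayGroup B :=
  ⟨by simp, by simp⟩

lemma neg_one_mem_conwayGroup : -1 ∈ ConwayGroup B :=
  ⟨by simp [det_neg], by simp⟩

lemma mul_mem_conwayGroup (hσ : σ ∈ ConwayGroup B) (hτ : τ ∈ ConwayGroup B) :
    σ * τ ∈ ConwayGroup B := by
  refine ⟨by rw [det_mul]; exact hσ.1.mul hτ.1, ?_⟩
  calc (σ * τ)ᵀ * B * (σ * τ) = τᵀ * (σᵀ * B * σ) * τ := by
        simp only [transpose_mul, Matrix.mul_assoc]
    _ = B := by rw [hσ.2, hτ.2]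

lemma inv_mem_conwayGroup (hσ : σ ∈ ConwayGroup B) : σ⁻¹ ∈ ConwayGroup B := by
  refine ⟨isUnit_nonsing_inv_det σ hσ.1, ?_⟩
  calc (σ⁻¹)ᵀ * B * σ⁻¹ = (σ⁻¹)ᵀ * (σᵀ * B * σ) * σ⁻¹ := by rw [hσ.2]
    _ = (σ * σ⁻¹)ᵀ * B * (σ * σ⁻¹) := by simp only [transpose_mul, Matrix.mul_assoc]
    _ = B := by simp [mul_nonsing_inv σ hσ.1]

lemma mulVec_inv_mulVec (hσ : σ ∈ ConwayGroup B) (x : LV) : σ *ᵥ (σ⁻¹ *ᵥ x) = x := by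
  rw [mulVec_mulVec, mul_nonsing_inv σ hσ.1, one_mulVec]

lemma inv_mulVec_mulVec (hσ : σ ∈ ConwayGroup B) (x : LV) : σ⁻¹ *ᵥ (σ *ᵥ x) = x := by
  rw [mulVec_mulVec, nonsing_inv_mul σ hσ.1, one_mulVec]

/-- Reduction of lattice vectors modulo `mΛ`. -/
def residue (m : ℕ) (x : LV) : Fin 24 → ZMod m := fun i => (x i : ZMod m)

lemma residue_eq_iff {m : ℕ} {x y : LV} :
    residue m x = residue m y ↔ ∃ w : LV, x - y = (m : ℤ) • w := by
  simp only [funext_iff, residue, Pi.sub_apply, Pi.smul_apply, smul_eq_mul]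
  rw [← Classical.skolem (p := fun i c => x i - y i = m * c)]
  exact forall_congr' fun i => eq_comm.trans (ZMod.intCast_eq_intCast_iff_dvd_sub ..)

lemma residue_mulVec (m : ℕ) (σ : Matrix (Fin 24) (Fin 24) ℤ) (x : LV) :
    residue m (σ *ᵥ x) = σ.map Int.cast *ᵥ residue m x := by
  ext i
  simp [residue, mulVec, dotProduct]

lemma residue_mulVec_eq_iff (m : ℕ) (hσ : σ ∈ ConwayGroup B) (x y : LV) :
    residue m (σ *ᵥ x) = residue m (σ *ᵥ y) ↔ residue m x = residue m y := by
  refine ⟨fun h => ?_, fun h => by simp only [residue_mulVec, h]⟩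
  simpa only [← residue_mulVec, inv_mulVec_mulVec hσ] using
    congrArg (σ⁻¹.map (Int.cast : ℤ → ZMod m) *ᵥ ·) h

lemma image_residue_orbitOf (m : ℕ) (v : LV) :
    residue m '' orbitOf B v = (fun σ => σ.map Int.cast *ᵥ residue m v) '' ConwayGroup B := by
  ext r
  constructor
  · rintro ⟨_, ⟨σ, hσ, rfl⟩, rfl⟩
    exact ⟨σ, hσ, (residue_mulVec m σ v).symm⟩
  · rintro ⟨σ, hσ, rfl⟩
    exact ⟨σ *ᵥ v, ⟨σ, hσ, rfl⟩, residue_mulVec m σ v⟩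

/-- `O` is a (finite) Conway orbit of vectors of type `a`, i.e. of norm `2a`. -/
structure IsOrbitOfType (B : Matrix (Fin 24) (Fin 24) ℤ) (O : Finset LV) (a : ℤ) : Prop where
  exists_eq_orbitOf : ∃ v, (O : Set LV) = orbitOf B v
  pairZ_self : ∀ {v}, v ∈ O → pairZ B v v = 2 * a

lemma OrbitData.exists_finset {O : Set LV} {x c : ℕ} (h : OrbitData B O x c) (hc : c ≠ 0) :
    ∃ F : Finset LV, (F : Set LV) = O ∧ IsOrbitOfType B F x ∧ F.card = c := by
  obtain ⟨horbit, hnorm, rfl⟩ := h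
  have hfin : O.Finite := Set.finite_coe_iff.mp (Nat.finite_of_card_ne_zero hc)
  exact ⟨hfin.toFinset, hfin.coe_toFinset, ⟨hfin.coe_toFinset.symm ▸ horbit,
    fun hv => hnorm _ (hfin.mem_toFinset.mp hv)⟩, (Nat.card_eq_card_finite_toFinset hfin).symm⟩

namespace IsOrbitOfType

variable {O R : Finset LV} {a b : ℤ} {u v : LV}

lemma exists_mem (hO : IsOrbitOfType B O a) : ∃ v, v ∈ O := by
  obtain ⟨v, hv⟩ := hO.exists_eq_orbitOf
  exact ⟨v, Finset.mem_coe.mp (hv ▸ ⟨1, one_mem_conwayGroup, (one_mulVec v).symm⟩)⟩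

lemma mulVec_mem (hO : IsOrbitOfType B O a) (hσ : σ ∈ ConwayGroup B) (hv : v ∈ O) :
    σ *ᵥ v ∈ O := by
  obtain ⟨w, hw⟩ := hO.exists_eq_orbitOf
  rw [← Finset.mem_coe, hw] at hv ⊢
  obtain ⟨τ, hτ, rfl⟩ := hv
  exact ⟨σ * τ, mul_mem_conwayGroup hσ hτ, mulVec_mulVec ..⟩

lemma neg_mem (hO : IsOrbitOfType B O a) (hv : v ∈ O) : -v ∈ O := by
  simpa [neg_mulVec] using hO.mulVec_mem neg_one_mem_conwayGroup hv

lemma coe_eq_orbitOf (hO : IsOrbitOfType B O a) (hv : v ∈ O) : (O : Set LV) = orbitOf B v := by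
  refine Set.Subset.antisymm (fun u hu => ?_) ?_
  · obtain ⟨w, hw⟩ := hO.exists_eq_orbitOf
    rw [← Finset.mem_coe, hw] at hv
    rw [hw] at hu
    obtain ⟨σ, hσ, rfl⟩ := hv
    obtain ⟨τ, hτ, rfl⟩ := hu
    refine ⟨τ * σ⁻¹, mul_mem_conwayGroup hτ (inv_mem_conwayGroup hσ), ?_⟩
    rw [← mulVec_mulVec, inv_mulVec_mulVec hσ]
  · rintro _ ⟨σ, hσ, rfl⟩
    exact hO.mulVec_mem hσ hv

lemma exists_mulVec_eq (hO : IsOrbitOfType B O a) (hv : v ∈ O) (hu : u ∈ O) :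
    ∃ σ ∈ ConwayGroup B, u = σ *ᵥ v := by
  rwa [← Finset.mem_coe, hO.coe_eq_orbitOf hv] at hu

lemma image_residue_eq (hO : IsOrbitOfType B O a) (hR : IsOrbitOfType B R b) (hv : v ∈ O)
    (hu : u ∈ R) {m : ℕ} (h : residue m v = residue m u) :
    residue m '' O = residue m '' R := by
  rw [hO.coe_eq_orbitOf hv, hR.coe_eq_orbitOf hu, image_residue_orbitOf, image_residue_orbitOf, h]

lemma sum_mulVec_eq {M : Type*} [AddCommMonoid M] (hO : IsOrbitOfType B O a) {g : LV → LV → M}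
    (hg : ∀ σ ∈ ConwayGroup B, ∀ v u, g (σ *ᵥ v) (σ *ᵥ u) = g v u) (hσ : σ ∈ ConwayGroup B)
    (v : LV) : ∑ u ∈ O, g (σ *ᵥ v) u = ∑ u ∈ O, g v u := by
  refine Finset.sum_bij' (fun u _ => σ⁻¹ *ᵥ u) (fun u _ => σ *ᵥ u)
    (fun u hu => hO.mulVec_mem (inv_mem_conwayGroup hσ) hu) (fun u hu => hO.mulVec_mem hσ hu)
    (fun u _ => mulVec_inv_mulVec hσ u) (fun u _ => inv_mulVec_mulVec hσ u) fun u _ => ?_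
  rw [← hg σ hσ v, mulVec_inv_mulVec hσ]

lemma sum_eq_of_mem {M : Type*} [AddCommMonoid M] (hO : IsOrbitOfType B O a)
    (hR : IsOrbitOfType B R b) {g : LV → LV → M}
    (hg : ∀ σ ∈ ConwayGroup B, ∀ v u, g (σ *ᵥ v) (σ *ᵥ u) = g v u) (hv : v ∈ R) (hu : u ∈ R) :
    ∑ x ∈ O, g v x = ∑ x ∈ O, g u x := by
  obtain ⟨σ, hσ, rfl⟩ := hR.exists_mulVec_eq hu hv
  exact hO.sum_mulVec_eq hg hσ u

lemma card_filter_eq_of_mem (hO : IsOrbitOfType B O a) (hR : IsOrbitOfType B R b)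
    {r : LV → LV → Prop} [DecidableRel r]
    (hr : ∀ σ ∈ ConwayGroup B, ∀ v u, r (σ *ᵥ v) (σ *ᵥ u) ↔ r v u) (hv : v ∈ R) (hu : u ∈ R) :
    (O.filter (r v)).card = (O.filter (r u)).card := by
  simpa only [Finset.card_filter] using hO.sum_eq_of_mem (g := fun x y => if r x y then 1 else 0) hR
    (fun σ hσ x y => by simp only [hr σ hσ]) hv hu

lemma card_mul_card_filter (hO : IsOrbitOfType B O a) (hR : IsOrbitOfType B R b)
    {r : LV → LV → Prop} [DecidableRel r]
    (hr : ∀ σ ∈ ConwayGroup B, ∀ v u, r (σ *ᵥ v) (σ *ᵥ u) ↔ r v u) (hu : u ∈ O) (hv : v ∈ R) :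
    O.card * (R.filter (r u)).card = R.card * (O.filter (r · v)).card := by
  have hdouble := Finset.sum_card_bipartiteAbove_eq_sum_card_bipartiteBelow r (s := O) (t := R)
  simp only [Finset.bipartiteAbove, Finset.bipartiteBelow] at hdouble
  rwa [Finset.sum_congr rfl fun x hx => hR.card_filter_eq_of_mem hO hr hx hu,
    Finset.sum_congr rfl fun y hy => hO.card_filter_eq_of_mem (r := fun y x => r x y) hR
      (fun σ hσ y x => hr σ hσ x y) hy hv, Finset.sum_const, Finset.sum_const, smul_eq_mul,
    smul_eq_mul] at hdouble

end IsOrbitOfType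

end Orbits

section ModTwo

variable {B : Matrix (Fin 24) (Fin 24) ℤ}

namespace IsLeech

lemma eq_or_neg_or_orthogonal_of_residue_two_eq (hB : IsLeech B) {x y : LV}
    (h : residue 2 x = residue 2 y) (hx : pairZ B x x ≤ 8) (hy : pairZ B y y ≤ 8) :
    x = y ∨ x = -y ∨ (pairZ B x x = 8 ∧ pairZ B y y = 8 ∧ pairZ B x y = 0) := by
  obtain ⟨w, hsub⟩ := residue_eq_iff.mp h
  have hadd : x + y = (2 : ℤ) • (y + w) := by
    linear_combination hsub
  have hsub_self := hB.pairZ_sub_self x y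
  have hadd_self := hB.pairZ_add_self x y
  rw [hsub, pairZ_smul_self] at hsub_self
  rw [hadd, pairZ_smul_self] at hadd_self
  push_cast at hsub_self
  by_cases hw : pairZ B w w < 4
  · left
    rw [← sub_eq_zero, hsub, hB.eq_zero_of_pairZ_self_lt hw, smul_zero]
  by_cases hyw : pairZ B (y + w) (y + w) < 4
  · right; left
    rw [eq_neg_iff_add_eq_zero, hadd, hB.eq_zero_of_pairZ_self_lt hyw, smul_zero]
  · exact .inr (.inr ⟨by omega, by omega, by omega⟩)

section RowSums

variable {F : Finset LV} {N C : ℤ}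

lemma sum_pairZ_self_eq (hF : ∀ v ∈ F, pairZ B v v = N) : ∑ v ∈ F, pairZ B v v = F.card * N := by
  rw [Finset.sum_congr rfl hF, Finset.sum_const, nsmul_eq_mul]

lemma card_mul_sq_le_of_row_le (hB : IsLeech B) (hC : 0 ≤ C) (hF : ∀ v ∈ F, pairZ B v v = N)
    (hrow : ∀ v ∈ F, ∑ u ∈ F, pairZ B v u ^ 2 ≤ C) : F.card * N ^ 2 ≤ 24 * C := by
  obtain rfl | hne := F.eq_empty_or_nonempty
  · simpa using hC
  have hwelch := hB.welch_bound F id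
  simp only [id, sum_pairZ_self_eq hF] at hwelch
  have hrows := Finset.sum_le_card_nsmul F _ C hrow
  have hcard : (0 : ℤ) < F.card := by exact_mod_cast hne.card_pos
  rw [nsmul_eq_mul] at hrows
  refine le_of_mul_le_mul_left ?_ hcard
  linarith

lemma tight_frame_of_row_le (hB : IsLeech B) (hF : ∀ v ∈ F, pairZ B v v = N)
    (hrow : ∀ v ∈ F, ∑ u ∈ F, pairZ B v u ^ 2 ≤ C) (hcard : F.card * N ^ 2 = 24 * C) (x : LV) :
    24 * ∑ u ∈ F, pairZ B x u ^ 2 = F.card * N * pairZ B x x := by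
  have hwelch := hB.welch_bound F id
  have htight := hB.tight_frame_of_welch_eq F id
  simp only [id, sum_pairZ_self_eq hF] at hwelch htight
  have hrows := Finset.sum_le_card_nsmul F _ C hrow
  rw [nsmul_eq_mul] at hrows
  have hsq : (F.card * N) ^ 2 = 24 * (F.card * C) := by
    linear_combination (F.card : ℤ) * hcard
  exact htight (le_antisymm hwelch (by linarith)) x

end RowSums

lemma row_le_of_orthogonal {F : Finset LV} {N : ℤ} {v : LV} (hv : pairZ B v v = N)
    (horth : ∀ u ∈ F, u = v ∨ u = -v ∨ pairZ B v u = 0) :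
    ∑ u ∈ F, pairZ B v u ^ 2 ≤ 2 * N ^ 2 := by
  have hterm : ∀ u ∈ F, pairZ B v u ^ 2 ≤
      (if u = v then N ^ 2 else 0) + if u = -v then N ^ 2 else 0 := by
    intro u hu
    have hN := sq_nonneg N
    rcases horth u hu with rfl | rfl | h
    · rw [hv, if_pos rfl]
      split_ifs <;> omega
    · rw [pairZ_neg_right, hv, neg_sq, if_pos (c := -v = -v) rfl]
      split_ifs <;> omega
    · rw [h]
      split_ifs <;> omega
  refine (Finset.sum_le_sum hterm).trans ?_
  rw [Finset.sum_add_distrib, Finset.sum_ite_eq', Finset.sum_ite_eq']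
  have hN := sq_nonneg N
  split_ifs <;> omega

end IsLeech

/-- The vectors of `O` congruent to `v` modulo `mΛ`. -/
def fiber (m : ℕ) (O : Finset LV) (v : LV) : Finset LV := O.filter (residue m · = residue m v)

lemma mem_fiber {m : ℕ} {O : Finset LV} {u v : LV} :
    u ∈ fiber m O v ↔ u ∈ O ∧ residue m u = residue m v :=
  Finset.mem_filter

lemma IsOrbitOfType.card_mul_card_fiber {O R : Finset LV} {a b : ℤ} (hO : IsOrbitOfType B O a)
    (hR : IsOrbitOfType B R b) {m : ℕ} {u v : LV} (hu : u ∈ O) (hv : v ∈ R)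
    (h : residue m u = residue m v) :
    O.card * (fiber m R v).card = R.card * (fiber m O v).card := by
  have hcount := hO.card_mul_card_filter hR (r := fun x y => residue m x = residue m y)
    (fun σ hσ => residue_mulVec_eq_iff m hσ) hu hv
  simpa only [fiber, h, eq_comm (a := residue m v)] using hcount

lemma IsLeech.card_fiber_two_le_two (hB : IsLeech B) {O : Finset LV}
    (hO : ∀ v ∈ O, pairZ B v v < 8) {x : LV} (hx : x ∈ O) : (fiber 2 O x).card ≤ 2 := by
  refine (Finset.card_le_card (t := {x, -x}) fun y hy => ?_).trans Finset.card_le_two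
  obtain ⟨hyO, hyx⟩ := mem_fiber.mp hy
  have := hO y hyO
  rcases hB.eq_or_neg_or_orthogonal_of_residue_two_eq hyx this.le (hO x hx).le with h | h | h
  · simp [h]
  · simp [h]
  · omega

variable {O2 O3 O4 : Finset LV}

namespace IsOrbitOfType

lemma eq_or_neg_or_orthogonal_of_mem_fiber_two (hB : IsLeech B) (h4 : IsOrbitOfType B O4 4)
    {f u v : LV} (hv : v ∈ fiber 2 O4 f) (hu : u ∈ fiber 2 O4 f) :
    u = v ∨ u = -v ∨ pairZ B v u = 0 := by
  obtain ⟨hvO, hvf⟩ := mem_fiber.mp hv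
  obtain ⟨huO, huf⟩ := mem_fiber.mp hu
  rcases hB.eq_or_neg_or_orthogonal_of_residue_two_eq (huf.trans hvf.symm) (h4.pairZ_self huO).le
    (h4.pairZ_self hvO).le with h | h | h
  · exact .inl h
  · exact .inr (.inl h)
  · exact .inr (.inr (hB.pairZ_comm v u ▸ h.2.2))

lemma row_fiber_two_le (hB : IsLeech B) (h4 : IsOrbitOfType B O4 4) (f : LV) :
    ∀ v ∈ fiber 2 O4 f, ∑ u ∈ fiber 2 O4 f, pairZ B v u ^ 2 ≤ 128 := fun v hv => by
  simpa using IsLeech.row_le_of_orthogonal (h4.pairZ_self (mem_fiber.mp hv).1)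
    fun u hu => h4.eq_or_neg_or_orthogonal_of_mem_fiber_two hB hv hu

lemma card_fiber_two_le (hB : IsLeech B) (h4 : IsOrbitOfType B O4 4) (f : LV) :
    (fiber 2 O4 f).card ≤ 48 := by
  have := hB.card_mul_sq_le_of_row_le (by norm_num)
    (fun v hv => h4.pairZ_self (mem_fiber.mp hv).1) (h4.row_fiber_two_le hB f)
  omega

end IsOrbitOfType

-- `1 + |O₂|/2 + |O₃|/2 + |O₄|/48 = 2 ^ 24`
theorem perfect_covering_mod_two (hB : IsLeech B) (h2 : IsOrbitOfType B O2 2)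
    (h3 : IsOrbitOfType B O3 3) (h4 : IsOrbitOfType B O4 4) (c2 : O2.card = 3 * 65520)
    (c3 : O3.card = 256 * 65520) (c4 : O4.card = 6075 * 65520) :
    (∀ r, ∃ i, ∃ x ∈ ![{0}, O2, O3, O4] i, residue 2 x = r) ∧
      ∀ f ∈ O4, (fiber 2 O4 f).card = 48 := by
  have hnorm : ∀ i, ∀ x ∈ ![{0}, O2, O3, O4] i, pairZ B x x = ![0, 4, 6, 8] i := by
    simp only [Fin.forall_fin_succ, IsEmpty.forall_iff, and_true]
    exact ⟨by simp [pairZ_zero_left], fun _ => h2.pairZ_self, fun _ => h3.pairZ_self,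
      fun _ => h4.pairZ_self⟩
  have hle : ∀ i, ![(0 : ℤ), 4, 6, 8] i ≤ 8 := by decide
  have hinj : ∀ i j, ![(0 : ℤ), 4, 6, 8] i = ![(0 : ℤ), 4, 6, 8] j → i = j := by decide
  have hfib : ∀ i, ∀ x ∈ ![{0}, O2, O3, O4] i,
      (fiber 2 (![{0}, O2, O3, O4] i) x).card ≤ ![1, 2, 2, 48] i := by
    simp only [Fin.forall_fin_succ, IsEmpty.forall_iff, and_true]
    exact ⟨fun _ _ => Finset.card_filter_le _ _,
      fun _ => hB.card_fiber_two_le_two fun v hv => (h2.pairZ_self hv).trans_lt (by norm_num),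
      fun _ => hB.card_fiber_two_le_two fun v hv => (h3.pairZ_self hv).trans_lt (by norm_num),
      fun f _ => h4.card_fiber_two_le hB f⟩
  have hdisj : ∀ i j, ∀ x ∈ ![{0}, O2, O3, O4] i, ∀ y ∈ ![{0}, O2, O3, O4] j,
      residue 2 x = residue 2 y → i = j := by
    intro i j x hx y hy hxy
    have hxi := hnorm i x hx
    have hyj := hnorm j y hy
    refine hinj i j (hxi.symm.trans (Eq.trans ?_ hyj))
    rcases hB.eq_or_neg_or_orthogonal_of_residue_two_eq hxy (hxi.trans_le (hle i))
      (hyj.trans_le (hle j)) with rfl | rfl | h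
    · rfl
    · rw [pairZ_neg_self]
    · rw [h.1, h.2.1]
  obtain ⟨hcover, hfiber⟩ := perfect_covering (n := ![1, 98280, 8386560, 8292375]) (by decide)
    hfib hdisj (by simp [Fin.forall_fin_succ, c2, c3, c4]) (by simp [Fin.sum_univ_succ, ZMod.card])
  exact ⟨hcover, hfiber 3⟩

/-- `L` is the set of the 196560 minimal vectors, with the tight frame (spherical 2-design)
property that they enjoy. -/
structure IsMinimalShell (B : Matrix (Fin 24) (Fin 24) ℤ) (L : Finset LV) : Prop where
  mem_iff : ∀ {w}, w ∈ L ↔ pairZ B w w = 4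
  card_eq : L.card = 196560
  sum_pairZ_sq : ∀ x, ∑ w ∈ L, pairZ B x w ^ 2 = 32760 * pairZ B x x

lemma IsOrbitOfType.mem_of_pairZ_self_eq_four (hB : IsLeech B) (h2 : IsOrbitOfType B O2 2)
    (h3 : IsOrbitOfType B O3 3) (h4 : IsOrbitOfType B O4 4)
    (hcover : ∀ r, ∃ i, ∃ x ∈ ![{0}, O2, O3, O4] i, residue 2 x = r) {w : LV}
    (hw : pairZ B w w = 4) : w ∈ O2 := by
  obtain ⟨i, x, hx, hxw⟩ := hcover (residue 2 w)
  have key : pairZ B x x ≤ 8 → pairZ B x x = 4 ∧ (x = w ∨ x = -w) := fun hx8 => by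
    rcases hB.eq_or_neg_or_orthogonal_of_residue_two_eq hxw hx8 (by omega) with rfl | rfl | h
    · exact ⟨hw, .inl rfl⟩
    · exact ⟨pairZ_neg_self (B := B) w ▸ hw, .inr rfl⟩
    · omega
  fin_cases i <;> simp only [Finset.mem_singleton, Fin.zero_eta, Fin.mk_one, Fin.reduceFinMk,
    cons_val] at hx
  · simp [hx, pairZ_zero_left] at key
  · obtain ⟨-, rfl | rfl⟩ := key (by rw [h2.pairZ_self hx]; norm_num)
    · exact hx
    · exact neg_neg w ▸ h2.neg_mem hx
  · have := h3.pairZ_self hx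
    omega
  · have := h4.pairZ_self hx
    omega

lemma sum_pairZ_sq_eq_of_mem {L O : Finset LV} {a b : ℤ} (hL : IsOrbitOfType B L a)
    (hO : IsOrbitOfType B O b) {x y : LV} (hx : x ∈ O) (hy : y ∈ O) :
    ∑ w ∈ L, pairZ B x w ^ 2 = ∑ w ∈ L, pairZ B y w ^ 2 :=
  hL.sum_eq_of_mem hO (g := fun x w => pairZ B x w ^ 2)
    (fun σ hσ v u => by rw [pairZ_mulVec_mulVec hσ]) hx hy

lemma sum_pairZ_sq_of_mem_type_four (hB : IsLeech B) (h2 : IsOrbitOfType B O2 2)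
    (h4 : IsOrbitOfType B O4 4) (c2 : O2.card = 3 * 65520)
    (hfiber : ∀ f ∈ O4, (fiber 2 O4 f).card = 48) {f : LV} (hf : f ∈ O4) :
    ∑ w ∈ O2, pairZ B f w ^ 2 = 262080 := by
  have hframe : ∀ w, ∑ g ∈ fiber 2 O4 f, pairZ B g w ^ 2 = 16 * pairZ B w w := fun w => by
    have h := hB.tight_frame_of_row_le (fun v hv => h4.pairZ_self (mem_fiber.mp hv).1)
      (h4.row_fiber_two_le hB f) (by rw [hfiber f hf]; norm_num) w
    rw [hfiber f hf] at h
    simp only [hB.pairZ_comm _ w]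
    omega
  have hdouble : 48 * ∑ w ∈ O2, pairZ B f w ^ 2 = 64 * O2.card := calc
    _ = ∑ g ∈ fiber 2 O4 f, ∑ w ∈ O2, pairZ B g w ^ 2 := by
      rw [Finset.sum_congr rfl fun g hg => sum_pairZ_sq_eq_of_mem h2 h4 (mem_fiber.mp hg).1 hf,
        Finset.sum_const, hfiber f hf, nsmul_eq_mul, Nat.cast_ofNat]
    _ = ∑ w ∈ O2, ∑ g ∈ fiber 2 O4 f, pairZ B g w ^ 2 := Finset.sum_comm
    _ = ∑ w ∈ O2, 64 := Finset.sum_congr rfl fun w hw => by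
      rw [hframe, h2.pairZ_self hw]; norm_num
    _ = 64 * O2.card := by rw [Finset.sum_const, nsmul_eq_mul, mul_comm]
  rw [c2] at hdouble
  omega

lemma exists_orthogonal_mem_fiber_two (hB : IsLeech B) (h4 : IsOrbitOfType B O4 4)
    (hfiber : ∀ f ∈ O4, (fiber 2 O4 f).card = 48) {f : LV} (hf : f ∈ O4) :
    ∃ g ∈ fiber 2 O4 f, pairZ B f g = 0 := by
  obtain ⟨g, hg, hgf⟩ := Finset.exists_mem_notMem_of_card_lt_card (s := {f, -f})
    (t := fiber 2 O4 f) (Finset.card_le_two.trans_lt (by rw [hfiber f hf]; norm_num))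
  simp only [Finset.mem_insert, Finset.mem_singleton] at hgf
  have := h4.eq_or_neg_or_orthogonal_of_mem_fiber_two hB (mem_fiber.mpr ⟨hf, rfl⟩) hg
  exact ⟨g, hg, by tauto⟩

-- Two orthogonal vectors `f, g` of a coordinate frame have `f + g, f - g ∈ 2 O₂`, so the
-- parallelogram law transfers the second moment from `O₄` to `O₂`.
lemma sum_pairZ_sq_of_mem_type_two (hB : IsLeech B) (h2 : IsOrbitOfType B O2 2)
    (h4 : IsOrbitOfType B O4 4) (c2 : O2.card = 3 * 65520)
    (hfiber : ∀ f ∈ O4, (fiber 2 O4 f).card = 48) (hmem : ∀ w, pairZ B w w = 4 → w ∈ O2)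
    {x : LV} (hx : x ∈ O2) : ∑ w ∈ O2, pairZ B x w ^ 2 = 131040 := by
  obtain ⟨f, hf⟩ := h4.exists_mem
  obtain ⟨g, hg, hfg⟩ := exists_orthogonal_mem_fiber_two hB h4 hfiber hf
  obtain ⟨hgO, hgf⟩ := mem_fiber.mp hg
  obtain ⟨b, hsub⟩ := residue_eq_iff.mp hgf.symm
  push_cast at hsub
  have hadd : f + g = (2 : ℤ) • (b + g) := by
    linear_combination hsub
  have hff := h4.pairZ_self hf
  have hgg := h4.pairZ_self hgO
  have hb : b ∈ O2 := hmem b <| by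
    have := hB.pairZ_sub_self f g
    rw [hsub, pairZ_smul_self] at this
    omega
  have hbg : b + g ∈ O2 := hmem _ <| by
    have := hB.pairZ_add_self f g
    rw [hadd, pairZ_smul_self] at this
    omega
  have hparallelogram : ∑ w ∈ O2, pairZ B (f + g) w ^ 2 + ∑ w ∈ O2, pairZ B (f - g) w ^ 2 =
      2 * ∑ w ∈ O2, pairZ B f w ^ 2 + 2 * ∑ w ∈ O2, pairZ B g w ^ 2 := by
    simp only [Finset.mul_sum, ← Finset.sum_add_distrib, pairZ_add_left, pairZ_sub_left]
    exact Finset.sum_congr rfl fun w _ => by ring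
  rw [hadd, hsub, sum_pairZ_sq_of_mem_type_four hB h2 h4 c2 hfiber hf,
    sum_pairZ_sq_of_mem_type_four hB h2 h4 c2 hfiber hgO] at hparallelogram
  simp only [pairZ_smul_left, mul_pow, ← Finset.mul_sum, sum_pairZ_sq_eq_of_mem h2 h2 hbg hx,
    sum_pairZ_sq_eq_of_mem h2 h2 hb hx] at hparallelogram
  omega

theorem IsOrbitOfType.isMinimalShell (hB : IsLeech B) (h2 : IsOrbitOfType B O2 2)
    (h3 : IsOrbitOfType B O3 3) (h4 : IsOrbitOfType B O4 4) (c2 : O2.card = 3 * 65520)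
    (c3 : O3.card = 256 * 65520) (c4 : O4.card = 6075 * 65520) : IsMinimalShell B O2 := by
  obtain ⟨hcover, hfiber⟩ := perfect_covering_mod_two hB h2 h3 h4 c2 c3 c4
  have hmem : ∀ w, pairZ B w w = 4 → w ∈ O2 := fun w =>
    h2.mem_of_pairZ_self_eq_four hB h3 h4 hcover
  refine ⟨⟨h2.pairZ_self, hmem _⟩, c2, fun x => ?_⟩
  have htight := hB.tight_frame_of_row_le (fun v hv => h2.pairZ_self hv)
    (fun v hv => (sum_pairZ_sq_of_mem_type_two hB h2 h4 c2 hfiber hmem hv).le)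
    (by rw [c2]; norm_num) x
  rw [c2] at htight
  omega

end ModTwo

section CongruenceModThree

variable {B : Matrix (Fin 24) (Fin 24) ℤ}

/-- `v` is an integral combination of two minimal vectors of inner product `k`. -/
def IsMinimalCombination (B : Matrix (Fin 24) (Fin 24) ℤ) (k : ℤ) (v : LV) : Prop :=
  ∃ (w w' : LV) (c c' : ℤ), pairZ B w w = 4 ∧ pairZ B w' w' = 4 ∧ pairZ B w w' = k ∧
    v = c • w + c' • w'

namespace IsLeech

lemma eq_zero_of_residue_eq_zero (hB : IsLeech B) {m : ℕ} {v : LV}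
    (h : residue m v = residue m 0) (hv : pairZ B v v < 4 * m ^ 2) : v = 0 := by
  obtain ⟨w, hw⟩ := residue_eq_iff.mp h
  rw [sub_zero] at hw
  rw [hw, pairZ_smul_self, mul_comm] at hv
  rw [hw, hB.eq_zero_of_pairZ_self_lt (lt_of_mul_lt_mul_right hv (sq_nonneg _)), smul_zero]

section

variable {v u : LV} {a b : ℤ}

-- The last alternative bounds the type `t` of `w` because `v - w`, unless zero, has type at
-- least two.
lemma exists_eq_sub_three_smul (hB : IsLeech B) (hv : pairZ B v v = 2 * a)
    (hu : pairZ B u u = 2 * b) (h : residue 3 v = residue 3 u) (hne : v ≠ u) :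
    ∃ (w : LV) (t : ℤ), u = v - (3 : ℤ) • w ∧ pairZ B w w = 2 * t ∧ 2 ≤ t ∧
      3 * pairZ B v w = a - b + 9 * t ∧ (v = w ∧ b = 4 * a ∨ 6 * t + 6 ≤ 2 * a + b) := by
  obtain ⟨w, hw⟩ := residue_eq_iff.mp h
  push_cast at hw
  obtain rfl : u = v - (3 : ℤ) • w := by rw [← hw, sub_sub_cancel]
  have hw0 : w ≠ 0 := by
    rintro rfl
    simp at hne
  obtain ⟨t, ht2, ht⟩ := hB.exists_type hw0
  rw [hB.pairZ_sub_self, pairZ_smul_self, pairZ_smul_right] at hu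
  refine ⟨w, t, rfl, ht, ht2, by omega, ?_⟩
  by_cases hvw : v = w
  · subst hvw
    exact .inl ⟨rfl, by omega⟩
  · obtain ⟨s, hs2, hs⟩ := hB.exists_type (sub_ne_zero.mpr hvw)
    rw [hB.pairZ_sub_self] at hs
    exact .inr (by omega)

lemma exists_pairZ_eq_of_residue_three_eq (hB : IsLeech B) (hv : pairZ B v v = 2 * a)
    (hu : pairZ B u u = 2 * b) (h : residue 3 v = residue 3 u) (hne : v ≠ u) (hab : b ≠ 4 * a) :
    ∃ t, 2 ≤ t ∧ 6 * t + 6 ≤ 2 * a + b ∧ pairZ B v u = a + b - 9 * t := by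
  obtain ⟨w, t, rfl, -, ht, hvw, hle⟩ := hB.exists_eq_sub_three_smul hv hu h hne
  refine ⟨t, ht, hle.resolve_left (hab ·.2), ?_⟩
  rw [pairZ_sub_right, pairZ_smul_right]
  omega

lemma eq_of_residue_three_eq (hB : IsLeech B) (hv : pairZ B v v = 2 * a)
    (hu : pairZ B u u = 2 * b) (h : residue 3 v = residue 3 u) (hab : b ≠ 4 * a)
    (hlt : 2 * a + b < 18) : v = u := by
  by_contra hne
  obtain ⟨t, ht, hle, -⟩ := hB.exists_pairZ_eq_of_residue_three_eq hv hu h hne hab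
  omega

lemma three_dvd_type_sub (hB : IsLeech B) (hv : pairZ B v v = 2 * a)
    (hu : pairZ B u u = 2 * b) (h : residue 3 v = residue 3 u) : 3 ∣ a - b := by
  rcases eq_or_ne v u with rfl | hne
  · omega
  · obtain ⟨w, t, -, -, -, hvw, -⟩ := hB.exists_eq_sub_three_smul hv hu h hne
    omega

end

section

variable {v u : LV}

lemma eq_neg_two_smul_of_type_two_eight (hB : IsLeech B) (hv : pairZ B v v = 4)
    (hu : pairZ B u u = 16) (h : residue 3 v = residue 3 u) : u = (-2 : ℤ) • v := by
  obtain ⟨w, t, rfl, -, ht, -, ⟨rfl, -⟩ | hle⟩ :=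
    hB.exists_eq_sub_three_smul (a := 2) (b := 8) hv hu h (by rintro rfl; omega)
  · module
  · omega

lemma isMinimalCombination_of_type_two_eight (hB : IsLeech B) (hv : pairZ B v v = 4)
    (hu : pairZ B u u = 16) (h : residue 3 v = residue 3 u) : IsMinimalCombination B 4 u :=
  ⟨v, v, -2, 0, hv, hv, hv, by rw [hB.eq_neg_two_smul_of_type_two_eight hv hu h]; module⟩

lemma isMinimalCombination_of_type_five_eight (hB : IsLeech B) (hv : pairZ B v v = 10)
    (hu : pairZ B u u = 16) (h : residue 3 v = residue 3 u) : IsMinimalCombination B 1 u := by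
  obtain ⟨w, t, rfl, hw, ht, hvw, hle⟩ :=
    hB.exists_eq_sub_three_smul (a := 5) (b := 8) hv hu h (by rintro rfl; omega)
  obtain rfl : t = 2 := by omega
  refine ⟨v - w, w, 1, -2, ?_, hw, ?_, by module⟩
  · rw [hB.pairZ_sub_self]
    omega
  · rw [pairZ_sub_left]
    omega

lemma pairZ_of_type_six (hB : IsLeech B) (hv : pairZ B v v = 12) (hu : pairZ B u u = 12)
    (h : residue 3 v = residue 3 u) (hne : v ≠ u) : pairZ B v u = -6 := by
  obtain ⟨t, ht, hle, hvu⟩ :=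
    hB.exists_pairZ_eq_of_residue_three_eq (a := 6) (b := 6) hv hu h hne (by norm_num)
  omega

lemma exists_eq_add_of_type_six (hB : IsLeech B) (hv : pairZ B v v = 12) (hu : pairZ B u u = 12)
    (h : residue 3 v = residue 3 u) (hne : v ≠ u) :
    ∃ w w', pairZ B w w = 4 ∧ pairZ B w' w' = 4 ∧ pairZ B w w' = 2 ∧ v = w + w' := by
  obtain ⟨w, t, -, hw, ht, hvw, hle⟩ :=
    hB.exists_eq_sub_three_smul (a := 6) (b := 6) hv hu h hne
  obtain rfl : t = 2 := by omega
  refine ⟨w, v - w, hw, ?_, ?_, (add_sub_cancel w v).symm⟩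
  · rw [hB.pairZ_sub_self]
    omega
  · rw [pairZ_sub_right, hB.pairZ_comm w v]
    omega

lemma isMinimalCombination_of_type_six (hB : IsLeech B) (hv : pairZ B v v = 12)
    (hu : pairZ B u u = 12) (h : residue 3 v = residue 3 u) (hne : v ≠ u) :
    IsMinimalCombination B 2 v := by
  obtain ⟨w, w', hw, hw', hww', rfl⟩ := hB.exists_eq_add_of_type_six hv hu h hne
  exact ⟨w, w', 1, 1, hw, hw', hww', by rw [one_smul, one_smul]⟩

lemma pairZ_of_type_seven (hB : IsLeech B) (hv : pairZ B v v = 14) (hu : pairZ B u u = 14)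
    (h : residue 3 v = residue 3 u) (hne : v ≠ u) : pairZ B v u = -4 := by
  obtain ⟨t, ht, hle, hvu⟩ :=
    hB.exists_pairZ_eq_of_residue_three_eq (a := 7) (b := 7) hv hu h hne (by norm_num)
  omega

lemma pairZ_or_isMinimalCombination_of_type_eight (hB : IsLeech B) (hv : pairZ B v v = 16)
    (hu : pairZ B u u = 16) (h : residue 3 v = residue 3 u) (hne : v ≠ u) :
    pairZ B v u = -2 ∨ IsMinimalCombination B 1 v := by
  obtain ⟨w, t, rfl, hw, ht, hvw, hle⟩ :=
    hB.exists_eq_sub_three_smul (a := 8) (b := 8) hv hu h hne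
  obtain rfl | rfl : t = 2 ∨ t = 3 := by omega
  · left
    rw [pairZ_sub_right, pairZ_smul_right]
    omega
  · right
    refine ⟨v - w, v - (2 : ℤ) • w, 2, -1, ?_, ?_, ?_, by module⟩
    all_goals simp only [pairZ_sub_left, pairZ_sub_right, pairZ_smul_left, pairZ_smul_right,
      hB.pairZ_comm w v]; omega

lemma pairZ_of_type_nine (hB : IsLeech B) (hv : pairZ B v v = 18) (hu : pairZ B u u = 18)
    (h : residue 3 v = residue 3 u) (hne : v ≠ u) : pairZ B v u = 0 ∨ pairZ B v u = -9 := by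
  obtain ⟨t, ht, hle, hvu⟩ :=
    hB.exists_pairZ_eq_of_residue_three_eq (a := 9) (b := 9) hv hu h hne (by norm_num)
  omega

lemma exists_eq_sub_of_type_six_nine (hB : IsLeech B) (hv : pairZ B v v = 12)
    (hu : pairZ B u u = 18) (h : residue 3 v = residue 3 u) :
    ∃ w, pairZ B w w = 4 ∧ pairZ B v w = 5 ∧ u = v - (3 : ℤ) • w := by
  obtain ⟨w, t, hu', hw, ht, hvw, hle⟩ :=
    hB.exists_eq_sub_three_smul (a := 6) (b := 9) hv hu h (by rintro rfl; omega)
  obtain rfl : t = 2 := by omega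
  exact ⟨w, hw, by omega, hu'⟩

end

lemma mul_card_sub_one_le_of_pairZ_le_neg (hB : IsLeech B) {ι : Type*} {S : Finset ι} {f : ι → LV}
    {m k : ℤ} (hS : S.Nonempty) (hself : ∀ i ∈ S, pairZ B (f i) (f i) = m)
    (hpair : ∀ i ∈ S, ∀ j ∈ S, i ≠ j → pairZ B (f i) (f j) ≤ -k) : k * (S.card - 1) ≤ m := by
  classical
  have hrow : ∀ i ∈ S, pairZ B (f i) (∑ j ∈ S, f j) ≤ m - k * (S.card - 1) := fun i hi => by
    have hsum := Finset.sum_le_card_nsmul (S.erase i) (fun j => pairZ B (f i) (f j)) (-k)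
      fun j hj => hpair i hi j (Finset.mem_of_mem_erase hj) (Finset.ne_of_mem_erase hj).symm
    rw [Finset.card_erase_of_mem hi, nsmul_eq_mul, Nat.cast_sub hS.card_pos] at hsum
    rw [pairZ_sum_right, ← Finset.add_sum_erase S _ hi, hself i hi]
    push_cast at hsum
    linarith
  have htotal := Finset.sum_le_card_nsmul S _ _ hrow
  rw [← pairZ_sum_left, nsmul_eq_mul] at htotal
  have hcard : (0 : ℤ) < S.card := by exact_mod_cast hS.card_pos
  have := nonneg_of_mul_nonneg_right ((hB.pairZ_self_nonneg _).trans htotal) hcard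
  linarith

end IsLeech

end CongruenceModThree

section FibersModThree

variable {B : Matrix (Fin 24) (Fin 24) ℤ}

lemma card_fiber_le_one {m : ℕ} {O : Finset LV} {x : LV}
    (h : ∀ v ∈ O, ∀ u ∈ O, residue m v = residue m u → v = u) : (fiber m O x).card ≤ 1 := by
  refine Finset.card_le_one.mpr fun v hv u hu => ?_
  rw [mem_fiber] at hv hu
  exact h v hv.1 u hu.1 (hv.2.trans hu.2.symm)

namespace IsLeech

variable {O : Finset LV} {x : LV}

lemma mul_card_fiber_sub_one_le (hB : IsLeech B) {m : ℕ} {N k : ℤ} (hx : x ∈ O)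
    (hself : ∀ v ∈ O, pairZ B v v = N)
    (hpair : ∀ v ∈ O, ∀ u ∈ O, residue m v = residue m u → v ≠ u → pairZ B v u = -k) :
    k * ((fiber m O x).card - 1) ≤ N := by
  refine hB.mul_card_sub_one_le_of_pairZ_le_neg (f := id) ⟨x, mem_fiber.mpr ⟨hx, rfl⟩⟩
    (fun v hv => hself v (mem_fiber.mp hv).1) fun v hv u hu hne => ?_
  rw [mem_fiber] at hv hu
  exact (hpair v hv.1 u hu.1 (hv.2.trans hu.2.symm) hne).le

lemma card_fiber_type_six_le (hB : IsLeech B) (hO : ∀ v ∈ O, pairZ B v v = 12) (hx : x ∈ O) :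
    (fiber 3 O x).card ≤ 3 := by
  have := hB.mul_card_fiber_sub_one_le hx hO fun v hv u hu =>
    hB.pairZ_of_type_six (hO v hv) (hO u hu)
  omega

-- Three congruent vectors of type seven would have sum `3s` with `s` of norm two.
lemma card_fiber_type_seven_le (hB : IsLeech B) (hO : ∀ v ∈ O, pairZ B v v = 14) :
    (fiber 3 O x).card ≤ 2 := by
  by_contra! hcard
  obtain ⟨p, q, r, hp, hq, hr, hpq, hpr, hqr⟩ := Finset.two_lt_card_iff.mp hcard
  rw [mem_fiber] at hp hq hr
  have hpq_res := hp.2.trans hq.2.symm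
  have hpr_res := hp.2.trans hr.2.symm
  obtain ⟨w, hw⟩ := residue_eq_iff.mp hpq_res
  obtain ⟨z, hz⟩ := residue_eq_iff.mp hpr_res
  push_cast at hw hz
  have hsum : p + q + r = (3 : ℤ) • (p - w - z) := by
    rw [smul_sub, smul_sub, ← hw, ← hz]
    module
  have hnorm : pairZ B (p + q + r) (p + q + r) = 18 := by
    rw [hB.pairZ_add_self, hB.pairZ_add_self, pairZ_add_left, hO p hp.1, hO q hq.1, hO r hr.1,
      hB.pairZ_of_type_seven (hO p hp.1) (hO q hq.1) hpq_res hpq,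
      hB.pairZ_of_type_seven (hO p hp.1) (hO r hr.1) hpr_res hpr,
      hB.pairZ_of_type_seven (hO q hq.1) (hO r hr.1) (hq.2.trans hr.2.symm) hqr]
    norm_num
  rw [hsum, pairZ_smul_self] at hnorm
  have hzero := hB.eq_zero_of_pairZ_self_lt (x := p - w - z) (by omega)
  rw [hzero, pairZ_zero_left] at hnorm
  omega

lemma card_fiber_type_eight_le (hB : IsLeech B) (hO : ∀ v ∈ O, pairZ B v v = 16)
    (hcomb : ∀ v ∈ O, ¬ IsMinimalCombination B 1 v) (hx : x ∈ O) : (fiber 3 O x).card ≤ 9 := by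
  have := hB.mul_card_fiber_sub_one_le hx hO fun v hv u hu h hne =>
    (hB.pairZ_or_isMinimalCombination_of_type_eight (hO v hv) (hO u hu) h hne).resolve_right
      (hcomb v hv)
  omega

section TypeNine

variable {F : Finset LV}

lemma add_add_eq_zero_of_type_nine (hB : IsLeech B) (hN : ∀ v ∈ F, pairZ B v v = 18)
    (hF : ∀ v ∈ F, ∀ u ∈ F, residue 3 v = residue 3 u) {v p q : LV} (hv : v ∈ F) (hp : p ∈ F)
    (hq : q ∈ F) (hpq : p ≠ q) (hvp : pairZ B v p = -9) (hvq : pairZ B v q = -9) :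
    v + p + q = 0 := by
  rcases hB.pairZ_of_type_nine (hN p hp) (hN q hq) (hF p hp q hq) hpq with h | h
  · exfalso
    have hnorm : pairZ B (-(v + p)) (-(v + p)) = 18 := by
      rw [pairZ_neg_self, hB.pairZ_add_self, hN v hv, hN p hp, hvp]
      norm_num
    have hres : residue 3 (-(v + p)) = residue 3 q := by
      obtain ⟨w, hw⟩ := residue_eq_iff.mp (hF v hv p hp)
      rw [← hF v hv q hq, residue_eq_iff]
      refine ⟨w - v, ?_⟩
      rw [smul_sub, ← hw]
      push_cast
      module
    have hpair : pairZ B (-(v + p)) q = 9 := by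
      rw [pairZ_neg_left, pairZ_add_left, h, hvq]
      norm_num
    have hne : -(v + p) ≠ q := by
      rintro rfl
      omega
    have := hB.pairZ_of_type_nine hnorm (hN q hq) hres hne
    omega
  · have hnorm : pairZ B (v + p + q) (v + p + q) < 4 := by
      rw [hB.pairZ_add_self, hB.pairZ_add_self, pairZ_add_left, hN v hv, hN p hp, hN q hq, hvp,
        hvq, h]
      norm_num
    exact hB.eq_zero_of_pairZ_self_lt hnorm

lemma card_filter_pairZ_eq_neg_nine_le (hB : IsLeech B) (hN : ∀ v ∈ F, pairZ B v v = 18)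
    (hF : ∀ v ∈ F, ∀ u ∈ F, residue 3 v = residue 3 u) {v : LV} (hv : v ∈ F) :
    (F.filter (pairZ B v · = -9)).card ≤ 2 := by
  by_contra! hcard
  obtain ⟨p, q, r, hp, hq, hr, hpq, hpr, hqr⟩ := Finset.two_lt_card_iff.mp hcard
  rw [Finset.mem_filter] at hp hq hr
  have hsum := hB.add_add_eq_zero_of_type_nine hN hF hv hp.1 hq.1 hpq hp.2 hq.2
  have hsum' := hB.add_add_eq_zero_of_type_nine hN hF hv hp.1 hr.1 hpr hp.2 hr.2
  exact hqr (add_left_cancel (hsum.trans hsum'.symm))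

lemma sum_pairZ_of_type_nine (hB : IsLeech B) (hN : ∀ v ∈ F, pairZ B v v = 18)
    (hF : ∀ v ∈ F, ∀ u ∈ F, residue 3 v = residue 3 u) {v : LV} (hv : v ∈ F) :
    ∑ u ∈ F, pairZ B v u = 18 - 9 * (F.filter (pairZ B v · = -9)).card ∧
      ∑ u ∈ F, pairZ B v u ^ 2 = 324 + 81 * (F.filter (pairZ B v · = -9)).card := by
  have hval : ∀ u ∈ F, pairZ B v u =
      (if u = v then 18 else 0) + if pairZ B v u = -9 then -9 else 0 := fun u hu => by
    by_cases huv : u = v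
    · simp [huv, hN v hv]
    · rcases hB.pairZ_of_type_nine (hN v hv) (hN u hu) (hF v hv u hu) (Ne.symm huv) with h | h <;>
        simp [h, huv]
  have hsq : ∀ u ∈ F, pairZ B v u ^ 2 =
      (if u = v then 324 else 0) + if pairZ B v u = -9 then 81 else 0 := fun u hu => by
    by_cases huv : u = v
    · simp [huv, hN v hv]
    · rcases hB.pairZ_of_type_nine (hN v hv) (hN u hu) (hF v hv u hu) (Ne.symm huv) with h | h <;>
        simp [h, huv]
  rw [Finset.sum_congr rfl hval, Finset.sum_congr rfl hsq]
  simp only [Finset.sum_add_distrib, Finset.sum_ite_eq', if_pos hv, ← Finset.sum_filter,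
    Finset.sum_const, nsmul_eq_mul]
  omega

lemma row_le_of_type_nine (hB : IsLeech B) (hN : ∀ v ∈ F, pairZ B v v = 18)
    (hF : ∀ v ∈ F, ∀ u ∈ F, residue 3 v = residue 3 u) :
    ∀ v ∈ F, ∑ u ∈ F, pairZ B v u ^ 2 ≤ 486 := fun v hv => by
  have := hB.card_filter_pairZ_eq_neg_nine_le hN hF hv
  have := (hB.sum_pairZ_of_type_nine hN hF hv).2
  omega

lemma card_le_of_type_nine (hB : IsLeech B) (hN : ∀ v ∈ F, pairZ B v v = 18)
    (hF : ∀ v ∈ F, ∀ u ∈ F, residue 3 v = residue 3 u) : F.card ≤ 36 := by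
  have := hB.card_mul_sq_le_of_row_le (by norm_num) hN (hB.row_le_of_type_nine hN hF)
  omega

lemma sum_pairZ_sq_of_type_nine (hB : IsLeech B) (hN : ∀ v ∈ F, pairZ B v v = 18)
    (hF : ∀ v ∈ F, ∀ u ∈ F, residue 3 v = residue 3 u) (hcard : F.card = 36) (x : LV) :
    ∑ u ∈ F, pairZ B x u ^ 2 = 27 * pairZ B x x := by
  have := hB.tight_frame_of_row_le hN (hB.row_le_of_type_nine hN hF) (by rw [hcard]; norm_num) x
  rw [hcard] at this
  omega

lemma sum_eq_zero_of_type_nine (hB : IsLeech B) (hN : ∀ v ∈ F, pairZ B v v = 18)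
    (hF : ∀ v ∈ F, ∀ u ∈ F, residue 3 v = residue 3 u) (hcard : F.card = 36) :
    ∑ u ∈ F, u = 0 := by
  refine hB.eq_zero_of_pairZ_self_lt ?_
  rw [pairZ_sum_left, Finset.sum_eq_zero fun v hv => ?_]
  · norm_num
  rw [pairZ_sum_right]
  have hrow := hB.sum_pairZ_of_type_nine hN hF hv
  have hframe := hB.sum_pairZ_sq_of_type_nine hN hF hcard v
  have := hN v hv
  omega

end TypeNine

end IsLeech

end FibersModThree

section SmallNorms

variable {B : Matrix (Fin 24) (Fin 24) ℤ} {v w : LV}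

lemma IsLeech.pairZ_le_two (hB : IsLeech B) (hv : pairZ B v v = 4) (hw : pairZ B w w = 4)
    (hne : v ≠ w) : pairZ B v w ≤ 2 := by
  obtain ⟨t, ht, hvw⟩ := hB.exists_type (sub_ne_zero.mpr hne)
  rw [hB.pairZ_sub_self] at hvw
  omega

lemma IsLeech.pairZ_le_three (hB : IsLeech B) (hv : pairZ B v v = 6) (hw : pairZ B w w = 4) :
    pairZ B v w ≤ 3 := by
  obtain ⟨t, ht, hvw⟩ := hB.exists_type (x := v - w) (sub_ne_zero.mpr (by rintro rfl; omega))
  rw [hB.pairZ_sub_self] at hvw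
  omega

end SmallNorms

section TypeNineFifteen

variable {B : Matrix (Fin 24) (Fin 24) ℤ} {F : Finset LV} {u : LV}

lemma IsLeech.pairZ_of_type_nine_fifteen (hB : IsLeech B) {x : LV} (hu : pairZ B u u = 30)
    (hx : pairZ B x x = 18) (h : residue 3 u = residue 3 x) :
    pairZ B u x = 6 ∨ pairZ B u x = -3 ∨ pairZ B u x = -12 := by
  obtain ⟨t, ht, hle, hux⟩ := hB.exists_pairZ_eq_of_residue_three_eq (a := 9) (b := 15) hx hu
    h.symm (by rintro rfl; omega) (by norm_num)
  rw [hB.pairZ_comm] at hux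
  omega

lemma IsLeech.card_filter_pairZ_eq_neg_twelve (hB : IsLeech B) (hN : ∀ v ∈ F, pairZ B v v = 18)
    (hF : ∀ v ∈ F, ∀ u ∈ F, residue 3 v = residue 3 u) (hcard : F.card = 36)
    (hu : pairZ B u u = 30) (hres : ∀ x ∈ F, residue 3 u = residue 3 x) :
    (F.filter (pairZ B u · = -12)).card = 1 := by
  have hval : ∀ x ∈ F, pairZ B u x ^ 2 - 3 * pairZ B u x - 18 =
      162 * if pairZ B u x = -12 then 1 else 0 := fun x hx => by
    rcases hB.pairZ_of_type_nine_fifteen hu (hN x hx) (hres x hx) with h | h | h <;>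
      norm_num [h]
  have hsum : ∑ x ∈ F, (pairZ B u x ^ 2 - 3 * pairZ B u x - 18) = 162 := by
    rw [Finset.sum_sub_distrib, Finset.sum_sub_distrib, ← Finset.mul_sum, ← pairZ_sum_right,
      hB.sum_eq_zero_of_type_nine hN hF hcard, hB.sum_pairZ_sq_of_type_nine hN hF hcard, hu,
      pairZ_zero_right, Finset.sum_const, hcard]
    norm_num
  rw [Finset.sum_congr rfl hval, ← Finset.mul_sum, Finset.sum_boole] at hsum
  omega

end TypeNineFifteen

section Slices

variable {B : Matrix (Fin 24) (Fin 24) ℤ} {L : Finset LV}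

/-- The vectors of `L` having inner product `c` with `v`. -/
def slice (B : Matrix (Fin 24) (Fin 24) ℤ) (L : Finset LV) (v : LV) (c : ℤ) : Finset LV :=
  L.filter (pairZ B v · = c)

lemma mem_slice {v w : LV} {c : ℤ} : w ∈ slice B L v c ↔ w ∈ L ∧ pairZ B v w = c :=
  Finset.mem_filter

lemma IsLeech.card_slice_five_le (hB : IsLeech B) (hL : IsMinimalShell B L) {v : LV}
    (hv : pairZ B v v = 12) : (slice B L v 5).card ≤ 24 := by
  obtain hempty | hne := (slice B L v 5).eq_empty_or_nonempty
  · simp [hempty]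
  -- The vectors `12w - 5v` are the projections of `12w` to the orthogonal complement of `v`.
  have hpair : ∀ w ∈ slice B L v 5, ∀ w' ∈ slice B L v 5,
      pairZ B ((12 : ℤ) • w - (5 : ℤ) • v) ((12 : ℤ) • w' - (5 : ℤ) • v) =
        144 * pairZ B w w' - 300 := fun w hw w' hw' => by
    simp only [pairZ_sub_left, pairZ_sub_right, pairZ_smul_left, pairZ_smul_right,
      hB.pairZ_comm w v, (mem_slice.mp hw).2, (mem_slice.mp hw').2, hv]
    ring
  have hsimplex := hB.mul_card_sub_one_le_of_pairZ_le_neg (m := 276) (k := 12)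
    (f := fun w => (12 : ℤ) • w - (5 : ℤ) • v) hne (fun w hw => ?_) fun w hw w' hw' hww' => ?_
  · omega
  · rw [hpair w hw w hw, hL.mem_iff.mp (mem_slice.mp hw).1]
    norm_num
  · have := hB.pairZ_le_two (hL.mem_iff.mp (mem_slice.mp hw).1)
      (hL.mem_iff.mp (mem_slice.mp hw').1) hww'
    rw [hpair w hw w' hw']
    omega

namespace IsMinimalShell

variable {v : LV} {c : ℤ}

lemma card_cap_le (hL : IsMinimalShell B L) (v : LV) (hc : 0 < c) :
    2 * c ^ 2 * (L.filter (c ≤ pairZ B v ·)).card ≤ 32760 * pairZ B v v := by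
  have hneg : ∑ w ∈ L.filter (pairZ B v · ≤ -c), pairZ B v w ^ 2 =
      ∑ w ∈ L.filter (c ≤ pairZ B v ·), pairZ B v w ^ 2 := by
    refine Finset.sum_nbij' (-·) (-·) ?_ ?_ (fun _ _ => neg_neg _) (fun _ _ => neg_neg _) ?_
    all_goals intro w hw
    all_goals simp only [Finset.mem_filter, hL.mem_iff, pairZ_neg_left, pairZ_neg_right,
      neg_neg] at hw ⊢
    · exact ⟨hw.1, by linarith⟩
    · exact ⟨hw.1, by linarith⟩
    · rw [neg_sq]
  have hdisj : Disjoint (L.filter (pairZ B v · ≤ -c)) (L.filter (c ≤ pairZ B v ·)) :=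
    Finset.disjoint_filter.mpr fun w _ hw hw' => by linarith
  have hsub := Finset.union_subset (L.filter_subset (pairZ B v · ≤ -c))
    (L.filter_subset (c ≤ pairZ B v ·))
  have hsum := Finset.sum_le_sum_of_subset_of_nonneg (f := fun w => pairZ B v w ^ 2) hsub
    fun _ _ _ => sq_nonneg _
  have hcap := Finset.card_nsmul_le_sum (L.filter (c ≤ pairZ B v ·))
    (fun w => pairZ B v w ^ 2) (c ^ 2)
    fun w hw => pow_le_pow_left₀ hc.le (Finset.mem_filter.mp hw).2 2
  rw [Finset.sum_union hdisj, hneg, hL.sum_pairZ_sq] at hsum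
  rw [nsmul_eq_mul] at hcap
  linarith

lemma card_slice_add_le (hL : IsMinimalShell B L) (v : LV) (hc : 0 < c) :
    2 * c ^ 2 * ((slice B L v c).card + (slice B L v (c + 1)).card) ≤ 32760 * pairZ B v v := by
  have hdisj : Disjoint (slice B L v c) (slice B L v (c + 1)) :=
    Finset.disjoint_filter.mpr fun w _ hw hw' => by omega
  have hsub : slice B L v c ∪ slice B L v (c + 1) ⊆ L.filter (c ≤ pairZ B v ·) := by
    intro w hw
    rw [Finset.mem_union, mem_slice, mem_slice] at hw
    exact Finset.mem_filter.mpr (hw.elim (fun h => ⟨h.1, h.2.ge⟩) fun h => ⟨h.1, by omega⟩)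
  have hcard := Finset.card_le_card hsub
  rw [Finset.card_union_of_disjoint hdisj] at hcard
  refine le_trans ?_ (hL.card_cap_le v hc)
  gcongr
  exact_mod_cast hcard

lemma card_slice_le (hL : IsMinimalShell B L) (v : LV) (hc : 0 < c) :
    2 * c ^ 2 * (slice B L v c).card ≤ 32760 * pairZ B v v := by
  refine le_trans ?_ (hL.card_slice_add_le v hc)
  gcongr
  exact le_add_of_nonneg_right (Int.natCast_nonneg _)

lemma sq_mul_card_le_of_isMinimalCombination (hL : IsMinimalShell B L) {O : Finset LV} {a k : ℤ}
    (hO : IsOrbitOfType B O a) {u : LV} (hu : u ∈ O) (hk : 0 < k)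
    (hcomb : IsMinimalCombination B k u) : 2 * k ^ 2 * O.card ≤ 196560 * 131040 := by
  obtain ⟨w, w', d, d', hw, hw', hww', rfl⟩ := hcomb
  have hsub : O ⊆ (L.sigma fun y => slice B L y k).image fun p => d • p.1 + d' • p.2 := by
    intro x hx
    obtain ⟨σ, hσ, rfl⟩ := hO.exists_mulVec_eq hu hx
    refine Finset.mem_image.mpr ⟨⟨σ *ᵥ w, σ *ᵥ w'⟩, ?_, ?_⟩
    · simp only [Finset.mem_sigma, mem_slice, hL.mem_iff, pairZ_mulVec_mulVec hσ, hw, hw', hww',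
        and_self]
    · rw [mulVec_add, mulVec_smul, mulVec_smul]
  have hcard := (Finset.card_le_card hsub).trans Finset.card_image_le
  rw [Finset.card_sigma] at hcard
  have hslice : ∀ y ∈ L, 2 * k ^ 2 * ((slice B L y k).card : ℤ) ≤ 131040 := fun y hy => by
    simpa [hL.mem_iff.mp hy] using hL.card_slice_le y hk
  calc 2 * k ^ 2 * (O.card : ℤ) ≤ 2 * k ^ 2 * ∑ y ∈ L, ((slice B L y k).card : ℤ) := by
        gcongr
        exact_mod_cast hcard
    _ = ∑ y ∈ L, 2 * k ^ 2 * ((slice B L y k).card : ℤ) := Finset.mul_sum ..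
    _ ≤ L.card • 131040 := Finset.sum_le_card_nsmul L _ _ hslice
    _ = 196560 * 131040 := by rw [hL.card_eq, nsmul_eq_mul]; norm_num

end IsMinimalShell

end Slices

section FiberBounds

variable {B : Matrix (Fin 24) (Fin 24) ℤ} {L O : Finset LV} {v : LV} {a b c : ℤ}

lemma card_fiber_le_of_exists {W : Finset LV}
    (h : ∀ u ∈ fiber 3 O v, ∃ w ∈ W, u = v - (3 : ℤ) • w) : (fiber 3 O v).card ≤ W.card := by
  refine (Finset.card_le_card (t := W.image (v - (3 : ℤ) • ·)) fun u hu => ?_).trans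
    Finset.card_image_le
  obtain ⟨w, hw, rfl⟩ := h u hu
  exact Finset.mem_image_of_mem _ hw

namespace IsMinimalShell

-- The fibre consists of `-2v` and of vectors `v - 3w` with `w` of type two or three.
lemma exists_card_fiber_le (hL : IsMinimalShell B L) (hB : IsLeech B) (hO : IsOrbitOfType B O b)
    (hv : pairZ B v v = 2 * a) (hne : a ≠ b) (hc : 3 * c = a - b + 18) (hlt : 2 * a + b < 30) :
    ∃ W : Finset LV, (∀ w ∈ W, pairZ B w w = 6 ∧ pairZ B v w = c + 3 ∧ 24 ≤ 2 * a + b) ∧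
      (fiber 3 O v).card ≤ 1 + (slice B L v c).card + W.card := by
  have hstep : ∀ u ∈ fiber 3 O v, ∃ w, u = v - (3 : ℤ) • w ∧
      (w = v ∨ w ∈ slice B L v c ∨
        pairZ B w w = 6 ∧ pairZ B v w = c + 3 ∧ 24 ≤ 2 * a + b) := fun u hu => by
    obtain ⟨huO, hres⟩ := mem_fiber.mp hu
    have huu := hO.pairZ_self huO
    obtain ⟨w, t, hu, hw, ht, hvw, ⟨rfl, -⟩ | hle⟩ :=
      hB.exists_eq_sub_three_smul hv huu hres.symm (by rintro rfl; omega)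
    · exact ⟨v, hu, .inl rfl⟩
    · refine ⟨w, hu, .inr ?_⟩
      rw [mem_slice, hL.mem_iff]
      omega
  choose! w hw hcases using hstep
  refine ⟨((fiber 3 O v).image w).filter
    fun y => pairZ B y y = 6 ∧ pairZ B v y = c + 3 ∧ 24 ≤ 2 * a + b,
    fun y hy => (Finset.mem_filter.mp hy).2, ?_⟩
  refine (card_fiber_le_of_exists (W := {v} ∪ slice B L v c ∪ _)
    fun u hu => ⟨w u, ?_, hw u hu⟩).trans
    ((Finset.card_union_le _ _).trans (Nat.add_le_add_right (Finset.card_union_le _ _) _))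
  simp only [Finset.mem_union, Finset.mem_singleton, Finset.mem_filter, or_assoc]
  exact (hcases u hu).imp_right (.imp_right fun h => ⟨Finset.mem_image_of_mem w hu, h⟩)

lemma card_fiber_le_of_lt (hL : IsMinimalShell B L) (hB : IsLeech B) (hO : IsOrbitOfType B O b)
    (hv : pairZ B v v = 2 * a) (hne : a ≠ b) (hc : 3 * c = a - b + 18) (hlt : 2 * a + b < 24) :
    (fiber 3 O v).card ≤ 1 + (slice B L v c).card := by
  obtain ⟨W, hW, hcard⟩ := hL.exists_card_fiber_le hB hO hv hne hc (by omega)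
  have hempty : W = ∅ := Finset.eq_empty_of_forall_notMem fun w hw => by
    have := hW w hw
    omega
  simpa [hempty] using hcard

-- If `w` of type three occurs in the fibre, then `v - w` is minimal.
lemma card_fiber_le_of_eq (hL : IsMinimalShell B L) (hB : IsLeech B) (hO : IsOrbitOfType B O b)
    (hv : pairZ B v v = 2 * a) (hne : a ≠ b) (hab : 2 * a + b = 24) :
    (fiber 3 O v).card ≤ 1 + (slice B L v (a - 2)).card + (slice B L v (a - 1)).card := by
  obtain ⟨W, hW, hcard⟩ :=
    hL.exists_card_fiber_le (c := a - 2) hB hO hv hne (by omega) (by omega)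
  refine hcard.trans (Nat.add_le_add_left (Finset.card_le_card_of_injOn (v - ·) (fun w hw => ?_)
    sub_right_injective.injOn) _)
  obtain ⟨hww, hvw, -⟩ := hW w hw
  rw [Finset.mem_coe, mem_slice, hL.mem_iff, hB.pairZ_sub_self, pairZ_sub_right]
  omega

lemma sq_mul_card_fiber_sub_one_le (hL : IsMinimalShell B L) (hB : IsLeech B)
    (hO : IsOrbitOfType B O b) (hv : pairZ B v v = 2 * a) (hne : a ≠ b)
    (hc : 3 * c = a - b + 18) (hb : b < a + 18) (hab : 2 * a + b ≤ 24) :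
    c ^ 2 * ((fiber 3 O v).card - 1) ≤ 32760 * a := by
  have hfiber : ((fiber 3 O v).card - 1 : ℤ) ≤
      (slice B L v c).card + (slice B L v (c + 1)).card := by
    rcases hab.lt_or_eq with h | h
    · have := hL.card_fiber_le_of_lt hB hO hv hne hc h
      omega
    · have := hL.card_fiber_le_of_eq hB hO hv hne h
      rw [show a - 2 = c by omega, show a - 1 = c + 1 by omega] at this
      omega
  have hslice := hL.card_slice_add_le v (c := c) (by omega)
  have := mul_le_mul_of_nonneg_left hfiber (sq_nonneg c)
  rw [hv] at hslice
  linarith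

lemma card_fiber_nine_le_card_slice_five (hL : IsMinimalShell B L) (hB : IsLeech B)
    (hO : IsOrbitOfType B O 9) (hv : pairZ B v v = 12) :
    (fiber 3 O v).card ≤ (slice B L v 5).card := by
  refine card_fiber_le_of_exists fun u hu => ?_
  obtain ⟨huO, hres⟩ := mem_fiber.mp hu
  obtain ⟨w, hw, hvw, rfl⟩ := hB.exists_eq_sub_of_type_six_nine hv (hO.pairZ_self huO) hres.symm
  exact ⟨w, mem_slice.mpr ⟨hL.mem_iff.mpr hw, hvw⟩, rfl⟩

-- A type three vector `w` with `(v, w) = 6` has `(w, p) = 3` for each minimal summand `p` of `v`.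
lemma card_fiber_six_fifteen_le_of_eq_add (hL : IsMinimalShell B L) (hB : IsLeech B)
    (hO : IsOrbitOfType B O 15) {p q : LV} (hp : pairZ B p p = 4) (hq : pairZ B q q = 4)
    (hpq : pairZ B p q = 2) : (fiber 3 O (p + q)).card ≤ 218401 := by
  have hv : pairZ B (p + q) (p + q) = 2 * 6 := by
    rw [hB.pairZ_add_self, hp, hq, hpq]
    norm_num
  obtain ⟨W, hW, hcard⟩ :=
    hL.exists_card_fiber_le (c := 3) hB hO hv (by norm_num) (by norm_num) (by norm_num)
  have hslice := hL.card_slice_le (p + q) (c := 3) (by norm_num)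
  have hWL : W.card ≤ L.card := by
    refine Finset.card_le_card_of_injOn (· - p) (fun w hw => ?_) (sub_left_injective.injOn)
    obtain ⟨hww, hvw, -⟩ := hW w hw
    have hwp := hB.pairZ_le_three hww hp
    have hwq := hB.pairZ_le_three hww hq
    rw [pairZ_add_left, hB.pairZ_comm p, hB.pairZ_comm q] at hvw
    rw [Finset.mem_coe, hL.mem_iff, hB.pairZ_sub_self]
    omega
  rw [hL.card_eq] at hWL
  rw [hv] at hslice
  omega

end IsMinimalShell

-- Exactly one vector of the fibre of `R` has inner product `-12` with a given `u ∈ O`.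
lemma IsLeech.card_dvd_card_of_type_nine_fifteen (hB : IsLeech B) {R : Finset LV}
    (hR : IsOrbitOfType B R 9) (hO : IsOrbitOfType B O 15) {u v : LV} (hu : u ∈ O) (hv : v ∈ R)
    (h : residue 3 u = residue 3 v) (hfiber : (fiber 3 R v).card = 36) : R.card ∣ O.card := by
  have hone := hB.card_filter_pairZ_eq_neg_twelve (F := fiber 3 R v)
    (fun x hx => hR.pairZ_self (mem_fiber.mp hx).1)
    (fun x hx y hy => (mem_fiber.mp hx).2.trans (mem_fiber.mp hy).2.symm) hfiber
    (hO.pairZ_self hu) fun x hx => h.trans (mem_fiber.mp hx).2.symm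
  have hcount := hO.card_mul_card_filter hR
    (r := fun u v => residue 3 v = residue 3 u ∧ pairZ B u v = -12)
    (fun σ hσ u v => by rw [residue_mulVec_eq_iff 3 hσ, pairZ_mulVec_mulVec hσ]) hu hv
  rw [h, ← Finset.filter_filter, ← fiber, hone, mul_one] at hcount
  exact ⟨_, hcount⟩

end FiberBounds

section Packing

-- Each `t`-subset of `T` is contained in at most one of the blocks `P w`.
lemma card_mul_choose_le_of_card_inter_lt {α β : Type*} [DecidableEq α] {T : Finset α}
    {W : Finset β} {P : β → Finset α} {m t : ℕ} (hsub : ∀ w ∈ W, P w ⊆ T)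
    (hcard : ∀ w ∈ W, (P w).card = m)
    (hinter : ∀ w ∈ W, ∀ w' ∈ W, w ≠ w' → (P w ∩ P w').card < t) :
    W.card * m.choose t ≤ T.card.choose t := by
  have hdisj : (W : Set β).PairwiseDisjoint fun w => (P w).powersetCard t := by
    intro w hw w' hw' hne
    refine Finset.disjoint_left.mpr fun s hs hs' => ?_
    rw [Finset.mem_powersetCard] at hs hs'
    have := Finset.card_le_card (Finset.subset_inter hs.1 hs'.1)
    have := hinter w hw w' hw' hne
    omega
  calc W.card * m.choose t = ∑ w ∈ W, ((P w).powersetCard t).card := by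
        rw [Finset.sum_congr rfl fun w hw => by rw [Finset.card_powersetCard, hcard w hw],
          Finset.sum_const, smul_eq_mul]
    _ = (W.disjiUnion (fun w => (P w).powersetCard t) hdisj).card :=
        (Finset.card_disjiUnion ..).symm
    _ ≤ (T.powersetCard t).card := Finset.card_le_card fun s hs => by
        obtain ⟨w, hw, hs⟩ := Finset.mem_disjiUnion.mp hs
        exact Finset.powersetCard_mono (hsub w hw) hs
    _ = T.card.choose t := Finset.card_powersetCard ..

end Packing

section CoordinateFrame

variable {B : Matrix (Fin 24) (Fin 24) ℤ} {v : LV} {S : Finset LV}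

/-- The `24` minimal vectors `w` having inner product `5` with a vector `v` of type six: the
vectors `2w - v` form a coordinate frame, that is, they are pairwise orthogonal of norm `8`. -/
structure IsCoordinateFrame (B : Matrix (Fin 24) (Fin 24) ℤ) (v : LV) (S : Finset LV) :
    Prop where
  norm_eq : pairZ B v v = 12
  pairZ_self : ∀ w ∈ S, pairZ B w w = 4
  pairZ_eq_five : ∀ w ∈ S, pairZ B v w = 5
  card_eq : S.card = 24

namespace IsCoordinateFrame

lemma sum_eq (hS : IsCoordinateFrame B v S) (hB : IsLeech B) : ∑ w ∈ S, w = (10 : ℤ) • v := by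
  have hrow : ∀ w ∈ S, pairZ B w (∑ w' ∈ S, w') ≤ 50 := fun w hw => by
    have hle := Finset.sum_le_card_nsmul (S.erase w) (pairZ B w) 2 fun w' hw' =>
      hB.pairZ_le_two (hS.pairZ_self w hw) (hS.pairZ_self w' (Finset.mem_of_mem_erase hw'))
        (Finset.ne_of_mem_erase hw').symm
    rw [Finset.card_erase_of_mem hw, hS.card_eq] at hle
    rw [pairZ_sum_right, ← Finset.add_sum_erase S _ hw, hS.pairZ_self w hw]
    norm_num at hle
    linarith
  have htotal := Finset.sum_le_card_nsmul S _ _ hrow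
  rw [← pairZ_sum_left, hS.card_eq] at htotal
  have hv : pairZ B v (∑ w ∈ S, w) = 120 := by
    rw [pairZ_sum_right, Finset.sum_congr rfl hS.pairZ_eq_five, Finset.sum_const, hS.card_eq]
    norm_num
  refine hB.eq_of_pairZ_sub_self_lt ?_
  rw [hB.pairZ_sub_self, pairZ_smul_self, pairZ_smul_right,
    hB.pairZ_comm (∑ w ∈ S, w) v, hv, hS.norm_eq]
  norm_num at htotal
  linarith

lemma sum_pairZ (hS : IsCoordinateFrame B v S) (hB : IsLeech B) (x : LV) :
    ∑ w ∈ S, pairZ B x w = 10 * pairZ B x v := by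
  rw [← pairZ_sum_right, hS.sum_eq hB, pairZ_smul_right]

lemma pairZ_eq_two (hS : IsCoordinateFrame B v S) (hB : IsLeech B) {w w' : LV} (hw : w ∈ S)
    (hw' : w' ∈ S) (hne : w ≠ w') : pairZ B w w' = 2 := by
  have hle : ∀ u ∈ S.erase w, pairZ B w u ≤ 2 := fun u hu =>
    hB.pairZ_le_two (hS.pairZ_self w hw) (hS.pairZ_self u (Finset.mem_of_mem_erase hu))
      (Finset.ne_of_mem_erase hu).symm
  have hsum : ∑ u ∈ S.erase w, pairZ B w u = ∑ u ∈ S.erase w, 2 := by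
    have := hS.sum_pairZ hB w
    rw [← Finset.add_sum_erase S _ hw, hS.pairZ_self w hw, hB.pairZ_comm w v,
      hS.pairZ_eq_five w hw] at this
    rw [Finset.sum_const, Finset.card_erase_of_mem hw, hS.card_eq]
    norm_num
    linarith
  exact (Finset.sum_eq_sum_iff_of_le hle).mp hsum w' (Finset.mem_erase.mpr ⟨hne.symm, hw'⟩)

lemma pairZ_two_smul_sub (hS : IsCoordinateFrame B v S) (hB : IsLeech B) {w w' : LV}
    (hw : w ∈ S) (hw' : w' ∈ S) :
    pairZ B ((2 : ℤ) • w - v) ((2 : ℤ) • w' - v) = if w = w' then 8 else 0 := by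
  simp only [pairZ_sub_left, pairZ_sub_right, pairZ_smul_left, pairZ_smul_right,
    hB.pairZ_comm w v, hS.pairZ_eq_five w hw, hS.pairZ_eq_five w' hw', hS.norm_eq]
  split_ifs with h
  · rw [← h, hS.pairZ_self w hw]
    norm_num
  · rw [hS.pairZ_eq_two hB hw hw' h]
    norm_num

lemma sum_pairZ_two_smul_sub_sq (hS : IsCoordinateFrame B v S) (hB : IsLeech B) (x : LV) :
    ∑ w ∈ S, pairZ B x ((2 : ℤ) • w - v) ^ 2 = 8 * pairZ B x x := by
  have htrace : ∑ w ∈ S, pairZ B ((2 : ℤ) • w - v) ((2 : ℤ) • w - v) = 192 := by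
    rw [Finset.sum_congr rfl fun w hw => (hS.pairZ_two_smul_sub hB hw hw).trans (if_pos rfl),
      Finset.sum_const, hS.card_eq]
    norm_num
  have hsq : ∑ w ∈ S, ∑ w' ∈ S, pairZ B ((2 : ℤ) • w - v) ((2 : ℤ) • w' - v) ^ 2 = 1536 := by
    rw [Finset.sum_congr rfl fun w hw => Finset.sum_congr rfl fun w' hw' => by
      rw [hS.pairZ_two_smul_sub hB hw hw']]
    simp [ite_pow, hS.card_eq]
  have htight := hB.tight_frame_of_welch_eq S fun w => (2 : ℤ) • w - v
  rw [htrace, hsq] at htight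
  have := htight (by norm_num) x
  omega

lemma sum_pairZ_sq (hS : IsCoordinateFrame B v S) (hB : IsLeech B) (x : LV) :
    ∑ w ∈ S, pairZ B x w ^ 2 = 2 * pairZ B x x + 4 * pairZ B x v ^ 2 := by
  have hframe := hS.sum_pairZ_two_smul_sub_sq hB x
  have hterm : ∀ w ∈ S, pairZ B x ((2 : ℤ) • w - v) ^ 2 =
      4 * pairZ B x w ^ 2 - 4 * pairZ B x v * pairZ B x w + pairZ B x v ^ 2 := fun w _ => by
    rw [pairZ_sub_right, pairZ_smul_right]
    ring
  rw [Finset.sum_congr rfl hterm, Finset.sum_add_distrib, Finset.sum_sub_distrib,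
    ← Finset.mul_sum, ← Finset.mul_sum, hS.sum_pairZ hB, Finset.sum_const, hS.card_eq] at hframe
  norm_num at hframe
  linarith

lemma sum_pairZ_mul (hS : IsCoordinateFrame B v S) (hB : IsLeech B) (x y : LV) :
    ∑ w ∈ S, pairZ B x w * pairZ B y w = 2 * pairZ B x y + 4 * (pairZ B x v * pairZ B y v) := by
  have hadd := hS.sum_pairZ_sq hB (x + y)
  simp only [hB.pairZ_add_self, pairZ_add_left, add_sq, Finset.sum_add_distrib, mul_assoc,
    ← Finset.mul_sum, hS.sum_pairZ_sq hB] at hadd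
  linarith

section Even

variable {q : ℕ} {x y : LV}

lemma pairZ_eq_or_of_norm_eq (hS : IsCoordinateFrame B v S) (hB : IsLeech B)
    (hx : pairZ B x x = 2 * q) (hxv : pairZ B x v = 2 * q) :
    ∀ w ∈ S, pairZ B x w = q ∨ pairZ B x w = q - 1 := by
  have hsum : ∑ w ∈ S, (q - pairZ B x w) * (q - 1 - pairZ B x w) = 0 := by
    have hterm : ∀ w ∈ S, (q - pairZ B x w) * (q - 1 - pairZ B x w) =
        pairZ B x w ^ 2 - (2 * q - 1) * pairZ B x w + q * (q - 1) := fun w _ => by ring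
    rw [Finset.sum_congr rfl hterm, Finset.sum_add_distrib, Finset.sum_sub_distrib,
      ← Finset.mul_sum, hS.sum_pairZ hB, hS.sum_pairZ_sq hB, hx, hxv, Finset.sum_const, hS.card_eq]
    ring
  intro w hw
  have hzero := (Finset.sum_eq_zero_iff_of_nonneg fun w _ => ?_).mp hsum w hw
  · rcases mul_eq_zero.mp hzero with h | h
    · exact .inl (by omega)
    · exact .inr (by omega)
  · rcases le_or_gt (q : ℤ) (pairZ B x w) with h | h
    · exact mul_nonneg_of_nonpos_of_nonpos (by omega) (by omega)
    · exact mul_nonneg (by omega) (by omega)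

lemma card_filter_of_norm_eq (hS : IsCoordinateFrame B v S) (hB : IsLeech B)
    (hx : pairZ B x x = 2 * q) (hxv : pairZ B x v = 2 * q) :
    (S.filter (pairZ B x · = q - 1)).card = 4 * q := by
  have hterm : ∀ w ∈ S, (q : ℤ) - pairZ B x w = if pairZ B x w = q - 1 then 1 else 0 :=
    fun w hw => by
      rcases hS.pairZ_eq_or_of_norm_eq hB hx hxv w hw with h | h <;> split_ifs <;> omega
  have hsum := Finset.sum_congr rfl hterm
  rw [Finset.sum_sub_distrib, hS.sum_pairZ hB, hxv, Finset.sum_const, hS.card_eq,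
    Finset.sum_boole, nsmul_eq_mul] at hsum
  push_cast at hsum
  omega

lemma card_inter_of_norm_eq (hS : IsCoordinateFrame B v S) (hB : IsLeech B)
    (hx : pairZ B x x = 2 * q) (hxv : pairZ B x v = 2 * q) (hy : pairZ B y y = 2 * q)
    (hyv : pairZ B y v = 2 * q) :
    ((S.filter (pairZ B x · = q - 1) ∩ S.filter (pairZ B y · = q - 1)).card : ℤ) =
      2 * pairZ B x y := by
  have hterm : ∀ w ∈ S, (if pairZ B x w = q - 1 ∧ pairZ B y w = q - 1 then (1 : ℤ) else 0) =
      pairZ B x w * pairZ B y w - q * pairZ B x w - q * pairZ B y w + q ^ 2 := fun w hw => by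
    have hne : (q : ℤ) ≠ q - 1 := by omega
    rcases hS.pairZ_eq_or_of_norm_eq hB hx hxv w hw with h | h <;>
      rcases hS.pairZ_eq_or_of_norm_eq hB hy hyv w hw with h' | h' <;>
      simp only [h, h', hne, and_true, and_false, and_self, if_true, if_false] <;> ring
  rw [← Finset.filter_and, ← Finset.sum_boole, Finset.sum_congr rfl hterm, Finset.sum_add_distrib,
    Finset.sum_sub_distrib, Finset.sum_sub_distrib, ← Finset.mul_sum, ← Finset.mul_sum,
    hS.sum_pairZ_mul hB, hS.sum_pairZ hB, hS.sum_pairZ hB, hxv, hyv, Finset.sum_const, hS.card_eq]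
  ring

lemma card_mul_choose_le (hS : IsCoordinateFrame B v S) (hB : IsLeech B) (hq : 1 ≤ q)
    {W : Finset LV} (hW : ∀ x ∈ W, pairZ B x x = 2 * q ∧ pairZ B v x = 2 * q) :
    W.card * (4 * q).choose (4 * q - 3) ≤ Nat.choose 24 (4 * q - 3) := by
  have hWv : ∀ x ∈ W, pairZ B x v = 2 * q := fun x hx => (hB.pairZ_comm x v).trans (hW x hx).2
  rw [← hS.card_eq]
  refine card_mul_choose_le_of_card_inter_lt (P := fun x => S.filter (pairZ B x · = q - 1))
    (fun _ _ => Finset.filter_subset _ _)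
    (fun x hx => hS.card_filter_of_norm_eq hB (hW x hx).1 (hWv x hx)) fun x hx y hy hne => ?_
  have hinter := hS.card_inter_of_norm_eq hB (hW x hx).1 (hWv x hx) (hW y hy).1 (hWv y hy)
  obtain ⟨t, ht, hxy⟩ := hB.exists_type (sub_ne_zero.mpr hne)
  rw [hB.pairZ_sub_self, (hW x hx).1, (hW y hy).1] at hxy
  omega

end Even

section Odd

variable {x y i : LV}

lemma pairZ_le_two_and_mul_nonneg (hS : IsCoordinateFrame B v S) (hB : IsLeech B)
    (hx : pairZ B x x = 4) (hxv : pairZ B x v = 3) :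
    ∀ w ∈ S, pairZ B x w ≤ 2 ∧ 0 ≤ (1 - pairZ B x w) * (2 - pairZ B x w) := fun w hw => by
  have hle : pairZ B x w ≤ 2 := by
    refine hB.pairZ_le_two hx (hS.pairZ_self w hw) ?_
    rintro rfl
    have := hS.pairZ_eq_five x hw
    rw [hB.pairZ_comm] at this
    omega
  refine ⟨hle, ?_⟩
  rcases hle.eq_or_lt with h | h
  · simp [h]
  · exact mul_nonneg (by omega) (by omega)

lemma sum_mul_eq_two (hS : IsCoordinateFrame B v S) (hB : IsLeech B)
    (hx : pairZ B x x = 4) (hxv : pairZ B x v = 3) :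
    ∑ w ∈ S, (1 - pairZ B x w) * (2 - pairZ B x w) = 2 := by
  have hterm : ∀ w ∈ S, (1 - pairZ B x w) * (2 - pairZ B x w) =
      pairZ B x w ^ 2 - 3 * pairZ B x w + 2 := fun w _ => by ring
  rw [Finset.sum_congr rfl hterm, Finset.sum_add_distrib, Finset.sum_sub_distrib,
    ← Finset.mul_sum, hS.sum_pairZ hB, hS.sum_pairZ_sq hB, hx, hxv, Finset.sum_const, hS.card_eq]
  norm_num

lemma exists_pairZ_eq_zero (hS : IsCoordinateFrame B v S) (hB : IsLeech B)
    (hx : pairZ B x x = 4) (hxv : pairZ B x v = 3) : ∃ i ∈ S, pairZ B x i = 0 := by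
  have hsum := hS.sum_mul_eq_two hB hx hxv
  have hnonneg := hS.pairZ_le_two_and_mul_nonneg hB hx hxv
  obtain ⟨i, hi, hne⟩ := Finset.exists_ne_zero_of_sum_ne_zero (hsum.trans_ne two_ne_zero)
  have hle : (1 - pairZ B x i) * (2 - pairZ B x i) ≤ 2 :=
    (Finset.single_le_sum (fun w hw => (hnonneg w hw).2) hi).trans_eq hsum
  have := left_ne_zero_of_mul hne
  have := right_ne_zero_of_mul hne
  have := (hnonneg i hi).1
  refine ⟨i, hi, ?_⟩
  by_contra hi_ne
  nlinarith [show pairZ B x i ≤ -1 by omega]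

lemma pairZ_eq_one_or_two (hS : IsCoordinateFrame B v S) (hB : IsLeech B)
    (hx : pairZ B x x = 4) (hxv : pairZ B x v = 3) (hi : i ∈ S) (hxi : pairZ B x i = 0) :
    ∀ w ∈ S.erase i, pairZ B x w = 1 ∨ pairZ B x w = 2 := by
  have hsum := hS.sum_mul_eq_two hB hx hxv
  rw [← Finset.add_sum_erase S _ hi, hxi] at hsum
  intro w hw
  have hzero := (Finset.sum_eq_zero_iff_of_nonneg fun w hw =>
    (hS.pairZ_le_two_and_mul_nonneg hB hx hxv w (Finset.mem_of_mem_erase hw)).2).mp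
    (by linarith) w hw
  rcases mul_eq_zero.mp hzero with h | h
  · exact .inl (by omega)
  · exact .inr (by omega)

lemma card_filter_pairZ_eq_two (hS : IsCoordinateFrame B v S) (hB : IsLeech B)
    (hx : pairZ B x x = 4) (hxv : pairZ B x v = 3) (hi : i ∈ S) (hxi : pairZ B x i = 0) :
    ((S.erase i).filter (pairZ B x · = 2)).card = 7 := by
  have hsum := hS.sum_pairZ hB x
  have hterm : ∀ w ∈ S.erase i, pairZ B x w = 1 + if pairZ B x w = 2 then 1 else 0 :=
    fun w hw => by
      rcases hS.pairZ_eq_one_or_two hB hx hxv hi hxi w hw with h | h <;> simp [h]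
  rw [← Finset.add_sum_erase S _ hi, Finset.sum_congr rfl hterm, Finset.sum_add_distrib,
    Finset.sum_boole, Finset.sum_const, Finset.card_erase_of_mem hi, hS.card_eq, hxi, hxv] at hsum
  norm_num at hsum
  omega

lemma card_inter_of_norm_eq_four (hS : IsCoordinateFrame B v S) (hB : IsLeech B)
    (hx : pairZ B x x = 4) (hxv : pairZ B x v = 3) (hy : pairZ B y y = 4)
    (hyv : pairZ B y v = 3) (hi : i ∈ S) (hxi : pairZ B x i = 0) (hyi : pairZ B y i = 0) :
    ((((S.erase i).filter (pairZ B x · = 2)) ∩ (S.erase i).filter (pairZ B y · = 2)).card : ℤ) =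
      2 * pairZ B x y - 1 := by
  have hterm : ∀ w ∈ S.erase i, (if pairZ B x w = 2 ∧ pairZ B y w = 2 then (1 : ℤ) else 0) =
      (pairZ B x w - 1) * (pairZ B y w - 1) := fun w hw => by
    rcases hS.pairZ_eq_one_or_two hB hx hxv hi hxi w hw with h | h <;>
      rcases hS.pairZ_eq_one_or_two hB hy hyv hi hyi w hw with h' | h' <;> simp [h, h']
  have htotal : ∑ w ∈ S, (pairZ B x w - 1) * (pairZ B y w - 1) = 2 * pairZ B x y := by
    simp only [sub_mul, mul_sub, one_mul, mul_one, Finset.sum_sub_distrib, hS.sum_pairZ_mul hB,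
      hS.sum_pairZ hB, hxv, hyv, Finset.sum_const, hS.card_eq]
    norm_num
    ring
  rw [← Finset.add_sum_erase S _ hi, hxi, hyi] at htotal
  rw [← Finset.filter_and, ← Finset.sum_boole, Finset.sum_congr rfl hterm]
  linarith

lemma card_le_of_pairZ_eq_zero (hS : IsCoordinateFrame B v S) (hB : IsLeech B) {W : Finset LV}
    (hW : ∀ x ∈ W, pairZ B x x = 4 ∧ pairZ B x v = 3) (hi : i ∈ S)
    (hWi : ∀ x ∈ W, pairZ B x i = 0) : W.card ≤ 253 := by
  have hpack := card_mul_choose_le_of_card_inter_lt (T := S.erase i) (t := 4)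
    (P := fun x => (S.erase i).filter (pairZ B x · = 2)) (fun _ _ => Finset.filter_subset _ _)
    (fun x hx => hS.card_filter_pairZ_eq_two hB (hW x hx).1 (hW x hx).2 hi (hWi x hx))
    fun x hx y hy hne => by
      have hinter := hS.card_inter_of_norm_eq_four hB (hW x hx).1 (hW x hx).2 (hW y hy).1
        (hW y hy).2 hi (hWi x hx) (hWi y hy)
      have := hB.pairZ_le_two (hW x hx).1 (hW y hy).1 hne
      omega
  rw [Finset.card_erase_of_mem hi, hS.card_eq, show Nat.choose (24 - 1) 4 = 8855 from rfl,
    show Nat.choose 7 4 = 35 from rfl] at hpack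
  omega

lemma card_le_of_norm_eq_four (hS : IsCoordinateFrame B v S) (hB : IsLeech B) {W : Finset LV}
    (hW : ∀ x ∈ W, pairZ B x x = 4 ∧ pairZ B x v = 3) : W.card ≤ 24 * 253 := by
  have hcover : W ⊆ S.biUnion fun i => W.filter (pairZ B · i = 0) := fun x hx => by
    obtain ⟨i, hi, hxi⟩ := hS.exists_pairZ_eq_zero hB (hW x hx).1 (hW x hx).2
    exact Finset.mem_biUnion.mpr ⟨i, hi, Finset.mem_filter.mpr ⟨hx, hxi⟩⟩
  rw [← hS.card_eq]
  exact (Finset.card_le_card hcover).trans <| Finset.card_biUnion_le_card_mul _ _ _ fun i hi =>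
    hS.card_le_of_pairZ_eq_zero hB (fun x hx => hW x (Finset.mem_of_mem_filter x hx)) hi
      fun x hx => (Finset.mem_filter.mp hx).2

end Odd

end IsCoordinateFrame

namespace IsMinimalShell

variable {L O : Finset LV}

lemma isCoordinateFrame_slice (hL : IsMinimalShell B L) (hB : IsLeech B)
    (hO : IsOrbitOfType B O 9) (hv : pairZ B v v = 12) (hcard : (fiber 3 O v).card = 24) :
    IsCoordinateFrame B v (slice B L v 5) where
  norm_eq := hv
  pairZ_self _ hw := hL.mem_iff.mp (mem_slice.mp hw).1
  pairZ_eq_five _ hw := (mem_slice.mp hw).2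
  card_eq := le_antisymm (hB.card_slice_five_le hL hv)
    (hcard ▸ hL.card_fiber_nine_le_card_slice_five hB hO hv)

lemma card_fiber_twelve_le_of_isCoordinateFrame (hL : IsMinimalShell B L) (hB : IsLeech B)
    (hO : IsOrbitOfType B O 12) (hv : IsCoordinateFrame B v (slice B L v 5)) :
    (fiber 3 O v).card ≤ 784 := by
  have hfiber := hL.card_fiber_le_of_eq (a := 6) hB hO hv.norm_eq (by norm_num) (by norm_num)
  have hslice := hv.card_mul_choose_le hB (q := 2) (by norm_num) (W := slice B L v 4)
    fun w hw => ⟨hL.mem_iff.mp (mem_slice.mp hw).1, (mem_slice.mp hw).2⟩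
  norm_num [Nat.choose, hv.card_eq] at hfiber hslice
  omega

lemma card_fiber_fifteen_le_of_isCoordinateFrame (hL : IsMinimalShell B L) (hB : IsLeech B)
    (hO : IsOrbitOfType B O 15) (hv : IsCoordinateFrame B v (slice B L v 5)) :
    (fiber 3 O v).card ≤ 12016 := by
  obtain ⟨W, hW, hfiber⟩ := hL.exists_card_fiber_le (a := 6) (c := 3) hB hO hv.norm_eq
    (by norm_num) (by norm_num) (by norm_num)
  have hW_card := hv.card_mul_choose_le hB (q := 3) (by norm_num)
    fun w hw => ⟨(hW w hw).1, (hW w hw).2.1⟩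
  have hslice := hv.card_le_of_norm_eq_four hB (W := slice B L v 3)
    fun w hw => ⟨hL.mem_iff.mp (mem_slice.mp hw).1, (hB.pairZ_comm w v).trans (mem_slice.mp hw).2⟩
  norm_num [Nat.choose] at hW_card
  omega

end IsMinimalShell

end CoordinateFrame

section Representatives

/-- The ten classes of orbits modulo `3Λ`, each named after its shortest orbit. -/
inductive OrbitClass
  | zero | two | three | four | five | sixA | sixB | seven | eightB | nineB
  deriving DecidableEq

namespace OrbitClass

instance : Fintype OrbitClass :=
  ⟨{zero, two, three, four, five, sixA, sixB, seven, eightB, nineB}, by rintro (_ | _) <;> decide⟩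

/-- The type of the vectors in the shortest orbit of a class. -/
def type : OrbitClass → ℕ
  | zero => 0
  | two => 2
  | three => 3
  | four => 4
  | five => 5
  | sixA | sixB => 6
  | seven => 7
  | eightB => 8
  | nineB => 9

/-- The size of the shortest orbit of a class. -/
def card : OrbitClass → ℕ
  | zero => 1
  | two => 3 * 65520
  | three => 256 * 65520
  | four => 6075 * 65520
  | five => 70656 * 65520
  | sixA => 518400 * 65520
  | sixB => 6900 * 65520
  | seven => 2861568 * 65520
  | eightB => 12295800 * 65520
  | nineB => 32972800 * 65520

/-- The number of vectors of the shortest orbit of a class in each coset of `3Λ` it meets. -/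
def fiberCard : OrbitClass → ℕ
  | sixB => 3
  | seven => 2
  | eightB => 9
  | nineB => 36
  | _ => 1

lemma fiberCard_pos : ∀ i : OrbitClass, 0 < i.fiberCard := by decide

lemma card_eq_mul_div : ∀ i : OrbitClass, i.card = i.fiberCard * (i.card / i.fiberCard) := by
  decide

lemma sum_card_div_fiberCard : ∑ i : OrbitClass, i.card / i.fiberCard = 3 ^ 24 := by
  decide

lemma cases_of_type_le : ∀ i j : OrbitClass, i ≠ j → i.type ≤ j.type →
    (3 : ℤ) ∣ i.type - j.type →
    i = zero ∨ (2 * i.type + j.type < 18 ∧ i.type ≠ j.type ∧ j.type ≠ 4 * i.type) ∨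
      i = two ∧ j = eightB ∨ i = five ∧ j = eightB ∨ i = sixA ∧ j = sixB ∨ i = sixB ∧ j = sixA ∨
      (i.type = 6 ∧ 24 * i.card < nineB.card) ∧ j = nineB := by
  decide

end OrbitClass

open OrbitClass

/-- `R i` is the shortest orbit of the class `i`, characterised by its type and its size. -/
structure IsRepresentativeFamily (B : Matrix (Fin 24) (Fin 24) ℤ) (R : OrbitClass → Finset LV) :
    Prop where
  isOrbit : ∀ i, IsOrbitOfType B (R i) i.type
  card_eq : ∀ i, (R i).card = i.card

lemma exists_isRepresentativeFamily {B : Matrix (Fin 24) (Fin 24) ℤ} {O : OrbitClass → Set LV}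
    (hO : ∀ i, OrbitData B (O i) i.type i.card) :
    ∃ R, IsRepresentativeFamily B R ∧ ∀ i, (R i : Set LV) = O i := by
  have hcard : ∀ i : OrbitClass, i.card ≠ 0 := by decide
  choose R hcoe horbit hcard using fun i => (hO i).exists_finset (hcard i)
  exact ⟨R, ⟨horbit, hcard⟩, hcoe⟩

lemma orbitData_zero (B : Matrix (Fin 24) (Fin 24) ℤ) : OrbitData B {0} 0 1 := by
  refine ⟨⟨0, ?_⟩, ?_, Nat.card_unique⟩
  · ext v
    simpa [orbitOf] using fun _ => ⟨1, one_mem_conwayGroup⟩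
  · rintro _ rfl
    exact pairZ_zero_left 0

namespace IsRepresentativeFamily

variable {B : Matrix (Fin 24) (Fin 24) ℤ} {R : OrbitClass → Finset LV} {i j : OrbitClass}
  {u v : LV}

lemma pairZ_self (hR : IsRepresentativeFamily B R) (hv : v ∈ R i) :
    pairZ B v v = 2 * (i.type : ℤ) :=
  (hR.isOrbit i).pairZ_self hv

lemma isMinimalShell (hR : IsRepresentativeFamily B R) (hB : IsLeech B) :
    IsMinimalShell B (R two) :=
  (hR.isOrbit two).isMinimalShell hB (hR.isOrbit three) (hR.isOrbit four) (hR.card_eq two)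
    (hR.card_eq three) (hR.card_eq four)

lemma not_isMinimalCombination (hR : IsRepresentativeFamily B R) (hB : IsLeech B) {k : ℤ}
    (hk : 0 < k) (hcard : 196560 * 131040 < 2 * k ^ 2 * i.card) (hv : v ∈ R i) :
    ¬ IsMinimalCombination B k v := fun hcomb => by
  have := (hR.isMinimalShell hB).sq_mul_card_le_of_isMinimalCombination (hR.isOrbit i) hv hk hcomb
  rw [hR.card_eq] at this
  exact absurd hcard this.not_gt

lemma eq_of_mem_sixA (hR : IsRepresentativeFamily B R) (hB : IsLeech B) (hv : v ∈ R sixA)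
    (hu : pairZ B u u = 12) (h : residue 3 v = residue 3 u) : v = u := by
  by_contra hne
  exact hR.not_isMinimalCombination hB two_pos (by decide) hv
    (hB.isMinimalCombination_of_type_six (hR.pairZ_self hv) hu h hne)

lemma residue_sixA_ne_sixB (hR : IsRepresentativeFamily B R) (hB : IsLeech B) (hv : v ∈ R sixA)
    (hu : u ∈ R sixB) : residue 3 v ≠ residue 3 u := fun h => by
  obtain rfl := hR.eq_of_mem_sixA hB hv (hR.pairZ_self hu) h
  have heq : R sixA = R sixB := Finset.coe_injective <|
    ((hR.isOrbit sixA).coe_eq_orbitOf hv).trans ((hR.isOrbit sixB).coe_eq_orbitOf hu).symm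
  have hcard := congrArg Finset.card heq
  rw [hR.card_eq, hR.card_eq] at hcard
  exact absurd hcard (by decide)

lemma residue_six_ne_nine (hR : IsRepresentativeFamily B R) (hB : IsLeech B) (hi : i.type = 6)
    (hcard : 24 * i.card < nineB.card) (hv : v ∈ R i) (hu : u ∈ R nineB) :
    residue 3 v ≠ residue 3 u := fun h => by
  have hL := hR.isMinimalShell hB
  have hv12 : pairZ B v v = 12 := by rw [hR.pairZ_self hv, hi]; rfl
  have hcount := (hR.isOrbit nineB).card_mul_card_fiber (hR.isOrbit i) hu hv h.symm
  have hfiber := (hL.card_fiber_nine_le_card_slice_five hB (hR.isOrbit nineB) hv12).trans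
    (hB.card_slice_five_le hL hv12)
  have hpos : 0 < (fiber 3 (R i) v).card := Finset.card_pos.mpr ⟨v, mem_fiber.mpr ⟨hv, rfl⟩⟩
  rw [hR.card_eq, hR.card_eq] at hcount
  nlinarith

lemma residue_ne_of_type_le (hR : IsRepresentativeFamily B R) (hB : IsLeech B) (hij : i ≠ j)
    (hle : i.type ≤ j.type) (hv : v ∈ R i) (hu : u ∈ R j) : residue 3 v ≠ residue 3 u := by
  intro h
  have hvi := hR.pairZ_self hv
  have huj := hR.pairZ_self hu
  obtain rfl | ⟨hlt, hne, hne'⟩ | ⟨rfl, rfl⟩ | ⟨rfl, rfl⟩ | ⟨rfl, rfl⟩ | ⟨rfl, rfl⟩ |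
    ⟨⟨hi, hcard⟩, rfl⟩ := cases_of_type_le i j hij hle (hB.three_dvd_type_sub hvi huj h)
  · have hlt : ∀ j : OrbitClass, j.type < 18 := by decide
    have hzero : ∀ j : OrbitClass, j.type = 0 → zero = j := by decide
    obtain rfl := hB.eq_zero_of_pairZ_self_lt (hvi.trans_lt (by decide))
    obtain rfl := hB.eq_zero_of_residue_eq_zero h.symm (by have := hlt j; omega)
    exact hij (hzero j (by rw [pairZ_zero_left] at huj; omega))
  · obtain rfl := hB.eq_of_residue_three_eq hvi huj h (by omega) (by omega)
    omega
  · exact hR.not_isMinimalCombination hB four_pos (by decide) hu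
      (hB.isMinimalCombination_of_type_two_eight hvi huj h)
  · exact hR.not_isMinimalCombination hB one_pos (by decide) hu
      (hB.isMinimalCombination_of_type_five_eight hvi huj h)
  · exact hR.residue_sixA_ne_sixB hB hv hu h
  · exact hR.residue_sixA_ne_sixB hB hu hv h.symm
  · exact hR.residue_six_ne_nine hB hi hcard hv hu h

lemma eq_of_residue_eq (hR : IsRepresentativeFamily B R) (hB : IsLeech B) (hv : v ∈ R i)
    (hu : u ∈ R j) (h : residue 3 v = residue 3 u) : i = j := by
  by_contra hij
  rcases le_total i.type j.type with hle | hle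
  · exact hR.residue_ne_of_type_le hB hij hle hv hu h
  · exact hR.residue_ne_of_type_le hB (Ne.symm hij) hle hu hv h.symm

lemma card_fiber_le (hR : IsRepresentativeFamily B R) (hB : IsLeech B) :
    ∀ i, ∀ v ∈ R i, (fiber 3 (R i) v).card ≤ i.fiberCard := by
  have hnorm : ∀ i, ∀ v ∈ R i, pairZ B v v = 2 * (i.type : ℤ) := fun i v => hR.pairZ_self
  have hsmall : ∀ i : OrbitClass, i.type ≠ 0 → i.type < 6 → ∀ v ∈ R i,
      (fiber 3 (R i) v).card ≤ 1 := fun i h0 h6 v _ => card_fiber_le_one fun x hx y hy h =>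
    hB.eq_of_residue_three_eq (hnorm i x hx) (hnorm i y hy) h (by omega) (by omega)
  rintro (_ | _ | _ | _ | _ | _ | _ | _ | _ | _)
  · exact fun v _ => (Finset.card_filter_le _ _).trans (hR.card_eq zero).le
  · exact hsmall two (by decide) (by decide)
  · exact hsmall three (by decide) (by decide)
  · exact hsmall four (by decide) (by decide)
  · exact hsmall five (by decide) (by decide)
  · exact fun v _ => card_fiber_le_one fun x hx y hy => hR.eq_of_mem_sixA hB hx (hnorm sixA y hy)
  · exact fun v => hB.card_fiber_type_six_le (hnorm sixB)
  · exact fun v _ => hB.card_fiber_type_seven_le (hnorm seven)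
  · exact fun v => hB.card_fiber_type_eight_le (hnorm eightB) fun x =>
      hR.not_isMinimalCombination hB one_pos (by decide)
  · exact fun v _ => hB.card_le_of_type_nine (fun x hx => hnorm nineB x (mem_fiber.mp hx).1)
      fun x hx y hy => (mem_fiber.mp hx).2.trans (mem_fiber.mp hy).2.symm

theorem perfect_covering_mod_three (hR : IsRepresentativeFamily B R) (hB : IsLeech B) :
    (∀ r, ∃ i, ∃ v ∈ R i, residue 3 v = r) ∧
      ∀ i, ∀ v ∈ R i, (fiber 3 (R i) v).card = i.fiberCard :=
  perfect_covering fiberCard_pos (hR.card_fiber_le hB)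
    (fun _ _ _ hv _ hu => hR.eq_of_residue_eq hB hv hu)
    (fun i => (hR.card_eq i).trans (card_eq_mul_div i))
    (sum_card_div_fiberCard.trans (by simp [ZMod.card]))

end IsRepresentativeFamily

end Representatives

section Classification

namespace OrbitClass

/-- The number of vectors in each coset of `3Λ` met by an orbit of size `m` in the class `i`, by
double counting; the division is exact whenever there is such an orbit. -/
def cosetCard (i : OrbitClass) (m : ℕ) : ℕ := i.fiberCard * m / i.card

/-- The necessary conditions, used to classify orbits by their type and size alone, for an orbit of
size `m` of vectors of type `x` to be in the class `i`. -/
def IsCompatible (i : OrbitClass) (x m : ℕ) : Prop :=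
  (3 : ℤ) ∣ i.type - x ∧ i.card ∣ i.fiberCard * m ∧ (i = zero → x = 0 ∨ 18 ≤ x) ∧
    (i.type ≠ x → x < i.type + 18 → 2 * i.type + x ≤ 24 →
      ((i.type + 18 - x) / 3) ^ 2 * (i.cosetCard m - 1) ≤ 32760 * i.type) ∧
    (i = sixB → x = 15 → i.cosetCard m ≤ 218401) ∧ (i = nineB → x = 15 → i.card ∣ m)

instance (i : OrbitClass) (x m : ℕ) : Decidable (i.IsCompatible x m) := by
  unfold IsCompatible
  infer_instance

end OrbitClass

open OrbitClass

/-- The orbit `O` meets the same cosets of `3Λ` as the representative `R i` of the class `i`. -/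
def HasClass (R : OrbitClass → Finset LV) (i : OrbitClass) (O : Set LV) : Prop :=
  residue 3 '' O = residue 3 '' (R i : Set LV)

lemma conjOrb3_iff {O O' : Set LV} :
    conjOrb3 O O' ↔ ∃ v ∈ O, ∃ u ∈ O', residue 3 v = residue 3 u := by
  simp only [conjOrb3, residue_eq_iff, Nat.cast_ofNat]

lemma HasClass.exists_residue_eq {R : OrbitClass → Finset LV} {i : OrbitClass} {O : Set LV} {v : LV}
    (h : HasClass R i O) (hv : v ∈ R i) : ∃ u ∈ O, residue 3 u = residue 3 v := by
  have hmem : residue 3 v ∈ residue 3 '' (R i : Set LV) := ⟨v, hv, rfl⟩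
  rwa [← h] at hmem

lemma HasClass.exists_residue_eq_mem {R : OrbitClass → Finset LV} {i : OrbitClass} {O : Set LV}
    {u : LV} (h : HasClass R i O) (hu : u ∈ O) : ∃ v ∈ R i, residue 3 v = residue 3 u := by
  have hmem : residue 3 u ∈ residue 3 '' O := ⟨u, hu, rfl⟩
  rwa [h] at hmem

namespace IsRepresentativeFamily

variable {B : Matrix (Fin 24) (Fin 24) ℤ} {R : OrbitClass → Finset LV} {i j : OrbitClass}

section Compatibility

variable {O : Finset LV} {x : ℕ} {u v : LV}

lemma card_mul_fiberCard (hR : IsRepresentativeFamily B R) (hB : IsLeech B)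
    (hO : IsOrbitOfType B O x) (hu : u ∈ O) (hv : v ∈ R i) (h : residue 3 u = residue 3 v) :
    i.fiberCard * O.card = i.card * (fiber 3 O v).card := by
  rw [← (hR.perfect_covering_mod_three hB).2 i v hv, mul_comm, ← hR.card_eq i]
  exact hO.card_mul_card_fiber (hR.isOrbit i) hu hv h

lemma card_fiber_eq_cosetCard (hR : IsRepresentativeFamily B R) (hB : IsLeech B)
    (hO : IsOrbitOfType B O x) (hu : u ∈ O) (hv : v ∈ R i) (h : residue 3 u = residue 3 v) :
    (fiber 3 O v).card = i.cosetCard O.card := by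
  have hpos : 0 < i.card := hR.card_eq i ▸ Finset.card_pos.mpr ⟨v, hv⟩
  rw [cosetCard, hR.card_mul_fiberCard hB hO hu hv h, Nat.mul_div_cancel_left _ hpos]

lemma sq_mul_card_fiber_sub_one_le (hR : IsRepresentativeFamily B R) (hB : IsLeech B)
    (hO : IsOrbitOfType B O x) (hu : u ∈ O) (hv : v ∈ R i) (h : residue 3 u = residue 3 v)
    (hne : i.type ≠ x) (hlt : x < i.type + 18) (hle : 2 * i.type + x ≤ 24) :
    ((i.type + 18 - x) / 3) ^ 2 * ((fiber 3 O v).card - 1) ≤ 32760 * i.type := by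
  have hdvd := hB.three_dvd_type_sub (hR.pairZ_self hv) (hO.pairZ_self hu) h.symm
  have hpos : 0 < (fiber 3 O v).card := Finset.card_pos.mpr ⟨u, mem_fiber.mpr ⟨hu, h⟩⟩
  have hbound := (hR.isMinimalShell hB).sq_mul_card_fiber_sub_one_le
    (c := ((i.type + 18 - x) / 3 : ℕ)) hB hO (hR.pairZ_self hv) (by omega) (by omega) (by omega)
    (by omega)
  rw [← Nat.cast_pred hpos] at hbound
  exact_mod_cast hbound

lemma card_fiber_fifteen_le (hR : IsRepresentativeFamily B R) (hB : IsLeech B)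
    (hO : IsOrbitOfType B O 15) (hv : v ∈ R sixB) : (fiber 3 O v).card ≤ 218401 := by
  have hfiber : 1 < (fiber 3 (R sixB) v).card := by
    rw [(hR.perfect_covering_mod_three hB).2 sixB v hv]
    decide
  obtain ⟨y, hy, hne⟩ := Finset.exists_mem_ne hfiber v
  obtain ⟨hyR, hyv⟩ := mem_fiber.mp hy
  obtain ⟨p, q, hp, hq, hpq, rfl⟩ :=
    hB.exists_eq_add_of_type_six (hR.pairZ_self hv) (hR.pairZ_self hyR) hyv.symm hne.symm
  exact (hR.isMinimalShell hB).card_fiber_six_fifteen_le_of_eq_add hB hO hp hq hpq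

lemma isCompatible (hR : IsRepresentativeFamily B R) (hB : IsLeech B)
    (hO : IsOrbitOfType B O x) (hu : u ∈ O) (hv : v ∈ R i) (h : residue 3 u = residue 3 v) :
    i.IsCompatible x O.card := by
  have hfiber := hR.card_fiber_eq_cosetCard hB hO hu hv h
  have hux := hO.pairZ_self hu
  refine ⟨hB.three_dvd_type_sub (hR.pairZ_self hv) hux h.symm,
    ⟨_, hR.card_mul_fiberCard hB hO hu hv h⟩, ?_, ?_, ?_, ?_⟩
  · rintro rfl
    obtain rfl := hB.eq_zero_of_pairZ_self_lt ((hR.pairZ_self hv).trans_lt (by decide))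
    refine or_iff_not_imp_right.mpr fun hlt => ?_
    obtain rfl := hB.eq_zero_of_residue_eq_zero h (by push_cast; omega)
    rw [pairZ_zero_left] at hux
    omega
  · exact hfiber ▸ hR.sq_mul_card_fiber_sub_one_le hB hO hu hv h
  · rintro rfl rfl
    exact hfiber ▸ hR.card_fiber_fifteen_le hB hO hv
  · rintro rfl rfl
    exact hR.card_eq nineB ▸ hB.card_dvd_card_of_type_nine_fifteen (hR.isOrbit nineB) hO hu hv h
      ((hR.perfect_covering_mod_three hB).2 nineB v hv)

end Compatibility

section Classes

variable {O O' : Set LV} {x m : ℕ}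

lemma exists_hasClass (hR : IsRepresentativeFamily B R) (hB : IsLeech B) (hO : OrbitData B O x m)
    (hm : m ≠ 0) : ∃ i, HasClass R i O ∧ i.IsCompatible x m := by
  obtain ⟨F, rfl, hF, rfl⟩ := hO.exists_finset hm
  obtain ⟨u, hu⟩ := hF.exists_mem
  obtain ⟨i, v, hv, h⟩ := (hR.perfect_covering_mod_three hB).1 (residue 3 u)
  exact ⟨i, hF.image_residue_eq (hR.isOrbit i) hu hv h.symm, hR.isCompatible hB hF hu hv h.symm⟩

lemma hasClass (hR : IsRepresentativeFamily B R) (hB : IsLeech B) (hO : OrbitData B O x m)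
    (hunique : ∀ j : OrbitClass, j.IsCompatible x m → j = i) (hm : m ≠ 0 := by decide) :
    HasClass R i O := by
  obtain ⟨j, hj, hcompat⟩ := hR.exists_hasClass hB hO hm
  exact hunique j hcompat ▸ hj

lemma hasClass_of_not_hasClass (hR : IsRepresentativeFamily B R) (hB : IsLeech B)
    (hO : OrbitData B O x m) (hj : ¬ HasClass R j O)
    (hunique : ∀ k : OrbitClass, k.IsCompatible x m → k = j ∨ k = i)
    (hm : m ≠ 0 := by decide) : HasClass R i O := by
  obtain ⟨k, hk, hcompat⟩ := hR.exists_hasClass hB hO hm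
  obtain rfl | rfl := hunique k hcompat
  · exact absurd hk hj
  · exact hk

lemma exists_card_fiber_eq (hR : IsRepresentativeFamily B R) (hB : IsLeech B)
    (hO : OrbitData B O x m) (hclass : HasClass R i O) (hm : m ≠ 0) :
    ∃ F, IsOrbitOfType B F x ∧ ∀ v ∈ R i, (fiber 3 F v).card = i.cosetCard m := by
  obtain ⟨F, rfl, hF, rfl⟩ := hO.exists_finset hm
  refine ⟨F, hF, fun v hv => ?_⟩
  obtain ⟨u, hu, h⟩ := hclass.exists_residue_eq hv
  exact hR.card_fiber_eq_cosetCard hB hF hu hv h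

lemma isCoordinateFrame_slice (hR : IsRepresentativeFamily B R) (hB : IsLeech B)
    (hO : OrbitData B O 9 (24 * sixA.card)) (hclass : HasClass R sixA O) {v : LV}
    (hv : v ∈ R sixA) : IsCoordinateFrame B v (slice B (R two) v 5) := by
  obtain ⟨F, hF, hfiber⟩ := hR.exists_card_fiber_eq hB hO hclass (by decide)
  exact (hR.isMinimalShell hB).isCoordinateFrame_slice hB hF (hR.pairZ_self hv) (hfiber v hv)

lemma cosetCard_sixA_le (hR : IsRepresentativeFamily B R) (hB : IsLeech B)
    (hframe : ∀ v ∈ R sixA, IsCoordinateFrame B v (slice B (R two) v 5)) (hO : OrbitData B O x m)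
    (hclass : HasClass R sixA O) (hm : m ≠ 0) :
    (x = 12 → sixA.cosetCard m ≤ 784) ∧ (x = 15 → sixA.cosetCard m ≤ 12016) := by
  obtain ⟨F, hF, hfiber⟩ := hR.exists_card_fiber_eq hB hO hclass hm
  obtain ⟨v, hv⟩ := (hR.isOrbit sixA).exists_mem
  have hL := hR.isMinimalShell hB
  rw [← hfiber v hv]
  constructor
  · rintro rfl
    exact hL.card_fiber_twelve_le_of_isCoordinateFrame hB hF (hframe v hv)
  · rintro rfl
    exact hL.card_fiber_fifteen_le_of_isCoordinateFrame hB hF (hframe v hv)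

lemma conjOrb3_of_hasClass (hR : IsRepresentativeFamily B R) (hO : HasClass R i O)
    (hO' : HasClass R i O') : conjOrb3 O O' := by
  obtain ⟨v, hv⟩ := (hR.isOrbit i).exists_mem
  obtain ⟨u, hu, huv⟩ := hO.exists_residue_eq hv
  obtain ⟨u', hu', huv'⟩ := hO'.exists_residue_eq hv
  exact conjOrb3_iff.mpr ⟨u, hu, u', hu', huv.trans huv'.symm⟩

lemma eq_of_conjOrb3 (hR : IsRepresentativeFamily B R) (hB : IsLeech B) (hO : HasClass R i O)
    (hO' : HasClass R j O') (h : conjOrb3 O O') : i = j := by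
  obtain ⟨u, hu, u', hu', huu'⟩ := conjOrb3_iff.mp h
  obtain ⟨v, hv, hvu⟩ := hO.exists_residue_eq_mem hu
  obtain ⟨v', hv', hvu'⟩ := hO'.exists_residue_eq_mem hu'
  exact hR.eq_of_residue_eq hB hv hv' (hvu.trans (huu'.trans hvu'.symm))

theorem conjOrb3_iff_eq_of_forall₂ (hR : IsRepresentativeFamily B R) (hB : IsLeech B)
    {I : List OrbitClass} (hI : I.Nodup) {l : List (List (Set LV))}
    (hl : List.Forall₂ (fun i c => ∀ O ∈ c, HasClass R i O) I l) :
    ∀ c ∈ l, ∀ c' ∈ l, ∀ O ∈ c, ∀ O' ∈ c', (conjOrb3 O O' ↔ c = c') := by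
  intro c hc c' hc' O hO O' hO'
  obtain ⟨n, hn, rfl⟩ := List.getElem_of_mem hc
  obtain ⟨n', hn', rfl⟩ := List.getElem_of_mem hc'
  have hclass : ∀ k (hk : k < l.length), ∀ O ∈ l[k], HasClass R (I[k]'(hl.length_eq ▸ hk)) O :=
    fun k hk => hl.get (hl.length_eq ▸ hk) hk
  constructor
  · intro h
    have heq := hR.eq_of_conjOrb3 hB (hclass n hn O hO) (hclass n' hn' O' hO') h
    obtain rfl := hI.getElem_inj_iff.mp heq
    rfl
  · intro h
    exact hR.conjOrb3_of_hasClass (hclass n hn O hO) (hclass n hn O' (h ▸ hO'))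

end Classes

end IsRepresentativeFamily

end Classification

/-- Theorem (Sun–Wang): among the Conway orbits of Leech vectors of type at most 16, the
conjugacy classes modulo `3Λ` are exactly: `{O₀}`; `{O₂, O_{8a}, O_{14c}}`;
`{O₃, O_{12a}, O_{12b}, O_{15a}}`; `{O₄, O_{10b}, O_{13a}, O_{16a}, O_{16b}, O_{16d}}`;
`{O₅, O_{8c}, O_{11a}, O_{14a}, O_{14d}}`; `{O_{6a}, O_{9a}, O_{12c}, O_{12e}, O_{15b}, O_{15e}}`;
`{O_{6b}, O_{12d}, O_{15c}}`; `{O₇, O_{10a}, O_{10c}, O_{13b}, O_{13c}, O_{16c}, O_{16e}, O_{16f}, O_{16g}}`;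
`{O_{8b}, O_{11b}, O_{14b}, O_{14e}}`; `{O_{9b}, O_{12f}, O_{15d}}`: two orbits of the list are
conjugate modulo `3Λ` if and only if they lie in the same class. -/
theorem leech_orbits_conjugacy_mod_three
    (B : Matrix (Fin 24) (Fin 24) ℤ) (hB : IsLeech B)
    (O2 O3 O4 O5 O6a O6b O7 O8a O8b O8c O9a O9b O10a O10b O10c O11a O11b O12a O12b O12c O12d O12e O12f O13a O13b O13c O14a O14b O14c O14d O14e O15a O15b O15c O15d O15e O16a O16b O16c O16d O16e O16f O16g : Set LV)
    (h2 : OrbitData B O2 2 (3 * 65520))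
    (h3 : OrbitData B O3 3 (256 * 65520))
    (h4 : OrbitData B O4 4 (6075 * 65520))
    (h5 : OrbitData B O5 5 (70656 * 65520))
    (h6a : OrbitData B O6a 6 (518400 * 65520))
    (h6b : OrbitData B O6b 6 (6900 * 65520))
    (h7 : OrbitData B O7 7 (2861568 * 65520))
    (h8a : OrbitData B O8a 8 (3 * 65520))
    (h8b : OrbitData B O8b 8 (12295800 * 65520))
    (h8c : OrbitData B O8c 8 (141312 * 65520))
    (h9a : OrbitData B O9a 9 (12441600 * 65520))
    (h9b : OrbitData B O9b 9 (32972800 * 65520))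
    (h10a : OrbitData B O10a 10 (143078400 * 65520))
    (h10b : OrbitData B O10b 10 (279450 * 65520))
    (h10c : OrbitData B O10c 10 (1430784 * 65520))
    (h11a : OrbitData B O11a 11 (19430400 * 65520))
    (h11b : OrbitData B O11b 11 (393465600 * 65520))
    (h12a : OrbitData B O12a 12 (256 * 65520))
    (h12b : OrbitData B O12b 12 (141312 * 65520))
    (h12c : OrbitData B O12c 12 (12441600 * 65520))
    (h12d : OrbitData B O12d 12 (2049300 * 65520))
    (h12e : OrbitData B O12e 12 (393465600 * 65520))
    (h12f : OrbitData B O12f 12 (667699200 * 65520))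
    (h13a : OrbitData B O13a 13 (12441600 * 65520))
    (h13b : OrbitData B O13b 13 (1007271936 * 65520))
    (h13c : OrbitData B O13c 13 (1573862400 * 65520))
    (h14a : OrbitData B O14a 14 (286156800 * 65520))
    (h14b : OrbitData B O14b 14 (5508518400 * 65520))
    (h14c : OrbitData B O14c 14 (13800 * 65520))
    (h14d : OrbitData B O14d 14 (19430400 * 65520))
    (h14e : OrbitData B O14e 14 (49183200 * 65520))
    (h15a : OrbitData B O15a 15 (2861568 * 65520))
    (h15b : OrbitData B O15b 15 (1335398400 * 65520))
    (h15c : OrbitData B O15c 15 (19430400 * 65520))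
    (h15d : OrbitData B O15d 15 (8012390400 * 65520))
    (h15e : OrbitData B O15e 15 (3147724800 * 65520))
    (h16a : OrbitData B O16a 16 (6075 * 65520))
    (h16b : OrbitData B O16b 16 (12441600 * 65520))
    (h16c : OrbitData B O16c 16 (286156800 * 65520))
    (h16d : OrbitData B O16d 16 (98366400 * 65520))
    (h16e : OrbitData B O16e 16 (5901984000 * 65520))
    (h16f : OrbitData B O16f 16 (16024780800 * 65520))
    (h16g : OrbitData B O16g 16 (3147724800 * 65520)) :
    ∀ c ∈ ([[{(0 : LV)}],
        [O2, O8a, O14c],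
        [O3, O12a, O12b, O15a],
        [O4, O10b, O13a, O16a, O16b, O16d],
        [O5, O8c, O11a, O14a, O14d],
        [O6a, O9a, O12c, O12e, O15b, O15e],
        [O6b, O12d, O15c],
        [O7, O10a, O10c, O13b, O13c, O16c, O16e, O16f, O16g],
        [O8b, O11b, O14b, O14e],
        [O9b, O12f, O15d]] : List (List (Set LV))),
    ∀ c' ∈ ([[{(0 : LV)}],
        [O2, O8a, O14c],
        [O3, O12a, O12b, O15a],
        [O4, O10b, O13a, O16a, O16b, O16d],
        [O5, O8c, O11a, O14a, O14d],
        [O6a, O9a, O12c, O12e, O15b, O15e],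
        [O6b, O12d, O15c],
        [O7, O10a, O10c, O13b, O13c, O16c, O16e, O16f, O16g],
        [O8b, O11b, O14b, O14e],
        [O9b, O12f, O15d]] : List (List (Set LV))),
    ∀ O ∈ c, ∀ O' ∈ c', (conjOrb3 O O' ↔ c = c') := by
  obtain ⟨R, hR, hcoe⟩ := exists_isRepresentativeFamily (B := B)
    (O := OrbitClass.rec {0} O2 O3 O4 O5 O6a O6b O7 O8b O9b) <| by
      rintro (_ | _)
      exacts [orbitData_zero B, h2, h3, h4, h5, h6a, h6b, h7, h8b, h9b]
  have hself i : HasClass R i _ := congrArg (residue 3 '' ·) (hcoe i).symm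
  have h9a' : HasClass R .sixA O9a := hR.hasClass hB h9a (by decide)
  have hframe v (hv : v ∈ R .sixA) := hR.isCoordinateFrame_slice hB h9a h9a' hv
  have h12f' : HasClass R .nineB O12f := hR.hasClass_of_not_hasClass hB h12f
    (fun h => absurd ((hR.cosetCard_sixA_le hB hframe h12f h (by decide)).1 rfl) (by decide))
    (by decide)
  have h15d' : HasClass R .nineB O15d := hR.hasClass_of_not_hasClass hB h15d
    (fun h => absurd ((hR.cosetCard_sixA_le hB hframe h15d h (by decide)).2 rfl) (by decide))
    (by decide)
  refine hR.conjOrb3_iff_eq_of_forall₂ hB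
    (I := [.zero, .two, .three, .four, .five, .sixA, .sixB, .seven, .eightB, .nineB]) (by decide) ?_
  simp only [List.forall₂_cons, List.forall₂_nil_left_iff, List.forall_mem_cons,
    List.not_mem_nil, false_imp_iff, implies_true, and_true]
  and_intros
  all_goals first
    | exact hself _
    | assumption
    | exact hR.hasClass hB (by assumption) (by decide)
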